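/- Let n ≥ 4, let L be a Cartan type Lie superalgebra over ℂ (one of W(n), S(n), S̃(n) for n even, or H(n) for n > 4), and let f ∈ BDer(L) be a homogeneous super-biderivation. Then there exist linear maps φ_f and ψ_f from L into L' such that f(x,y) = [φ_f(x), y] = [x, ψ_f(y)] for all x, y ∈ L. Moreover: (1) if f ∈ BDer(L)_ε for a weight ε ∈ H_L^*, then φ_f and ψ_f have weight ε (i.e. φ_f(L_η) ⊆ L'_{ε+η} and ψ_f(L_η) ⊆ L'_{ε+η} for all weights η); (2) if f ∈ BDer(L)_i for i ∈ ℤ, then φ_f and ψ_f have ℤ-degree i (i.e. φ_f(L_j) ⊆ L'_{i+j} and ψ_f(L_j) ⊆ L'_{i+j} for all j). -/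

import Mathlib

open scoped BigOperators

noncomputable section

namespace CartanSuper

/-- Coordinates of the exterior algebra `Λ(n)` with respect to the monomial basis
`{x_S : S ⊆ {1,…,n}}`. -/
abbrev Lambda (n : ℕ) := Finset (Fin n) → ℂ

/-- Endomorphism algebra of `Λ(n)`. -/
abbrev E (n : ℕ) := Module.End ℂ (Lambda n)

variable (n : ℕ)

/-- `(−1)^k`. -/
def msign (k : ℕ) : ℂ := (-1 : ℂ) ^ k

/-- The basis monomial `x_S = x_{i₁}⋯x_{i_k}` (indices in increasing order). -/
def mono (S : Finset (Fin n)) : Lambda n := fun T => if T = S then 1 else 0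

/-- Number of inversions between `S` and `T`. -/
def inversions (S T : Finset (Fin n)) : ℕ := ((S ×ˢ T).filter fun p => p.2 < p.1).card

/-- The multiplication of `Λ(n)` in coordinates:
`x_S · x_T = (−1)^{inversions} x_{S ∪ T}` for disjoint `S, T` and `0` otherwise. -/
def lmulFun (f g : Lambda n) : Lambda n :=
  fun U => ∑ S ∈ U.powerset, msign (inversions n S (U \ S)) * f S * g (U \ S)

/-- Left multiplication by an element of `Λ(n)`, as a linear map `Λ(n) →ₗ End Λ(n)`. -/
def mulOp : Lambda n →ₗ[ℂ] E n where
  toFun f :=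
    { toFun := lmulFun n f
      map_add' := by
        intro g h; funext U
        simp [lmulFun, mul_add, Finset.sum_add_distrib]
      map_smul' := by
        intro c g; funext U
        simp only [lmulFun, Pi.smul_apply, smul_eq_mul, RingHom.id_apply, Finset.mul_sum]
        exact Finset.sum_congr rfl (by intros; ring) }
  map_add' := by
    intro f g; apply LinearMap.ext; intro h; funext U
    show lmulFun n (f + g) h U = lmulFun n f h U + lmulFun n g h U
    simp only [lmulFun]
    rw [← Finset.sum_add_distrib]
    exact Finset.sum_congr rfl (by intros; simp [Pi.add_apply]; ring)
  map_smul' := by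
    intro c f; apply LinearMap.ext; intro h; funext U
    show lmulFun n (c • f) h U = (c • lmulFun n f h) U
    simp only [lmulFun, Pi.smul_apply, smul_eq_mul, Finset.mul_sum]
    exact Finset.sum_congr rfl (by intros; ring)

/-- The superderivation `∂_i` of `Λ(n)`, in coordinates. -/
def pd (i : Fin n) : E n where
  toFun f := fun S =>
    if i ∈ S then 0 else msign (S.filter (· < i)).card * f (insert i S)
  map_add' := by
    intro f g; funext S; by_cases h : i ∈ S <;> simp [h, mul_add]
  map_smul' := by
    intro c f; funext S; by_cases h : i ∈ S <;> simp [h] <;> ring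

/-- The parity operator `σ` of `Λ(n)`: `σ(x_S) = (−1)^{|S|} x_S`. -/
def par : E n where
  toFun f := fun S => msign S.card * f S
  map_add' := by intro f g; funext S; simp [mul_add]
  map_smul' := by intro c f; funext S; simp; ring

/-- The super-commutator `[D,F] = D∘F − (−1)^{|D||F|} F∘D`, extended bilinearly to all of
`End Λ(n)` using the parity operator `σ`
(for homogeneous `D`, `σ∘D∘σ = (−1)^{|D|} D`). -/
def sbFun (D F : E n) : E n :=
  D * F - (2:ℂ)⁻¹ • ((F + par n * F * par n) * D + (F - par n * F * par n) * (par n * D * par n))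

/-- The super-commutator as a bilinear map. -/
def sbL : E n →ₗ[ℂ] E n →ₗ[ℂ] E n :=
  LinearMap.mk₂ ℂ (sbFun n)
    (fun D D' F => by
      simp only [sbFun, add_mul, sub_mul, mul_add, mul_sub, smul_mul_assoc, mul_smul_comm,
        smul_add, smul_sub]
      module)
    (fun c D F => by
      simp only [sbFun, add_mul, sub_mul, mul_add, mul_sub, smul_mul_assoc, mul_smul_comm,
        smul_add, smul_sub]
      module)
    (fun D F F' => by
      simp only [sbFun, add_mul, sub_mul, mul_add, mul_sub, smul_mul_assoc, mul_smul_comm,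
        smul_add, smul_sub]
      module)
    (fun c D F => by
      simp only [sbFun, add_mul, sub_mul, mul_add, mul_sub, smul_mul_assoc, mul_smul_comm,
        smul_add, smul_sub]
      module)

/-- Shorthand for the super-commutator. -/
def sb (D F : E n) : E n := sbL n D F

/-- The ℤ₂-homogeneous component of `Λ(n)` of parity `p`. -/
def lpar (p : ZMod 2) : Submodule ℂ (Lambda n) where
  carrier := {f | ∀ S : Finset (Fin n), (S.card : ZMod 2) ≠ p → f S = 0}
  add_mem' := by intro f g hf hg S hS; simp [Pi.add_apply, hf S hS, hg S hS]
  zero_mem' := by intro S hS; rfl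
  smul_mem' := by intro c f hf S hS; simp [Pi.smul_apply, hf S hS]

/-- The ℤ-homogeneous component of `Λ(n)` of degree `m` (zero unless `0 ≤ m ≤ n`). -/
def ldeg (m : ℤ) : Submodule ℂ (Lambda n) where
  carrier := {f | ∀ S : Finset (Fin n), (S.card : ℤ) ≠ m → f S = 0}
  add_mem' := by intro f g hf hg S hS; simp [Pi.add_apply, hf S hS, hg S hS]
  zero_mem' := by intro S hS; rfl
  smul_mem' := by intro c f hf S hS; simp [Pi.smul_apply, hf S hS]

/-- Endomorphisms of `Λ(n)` that are ℤ₂-homogeneous of parity `p`. -/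
def epar (p : ZMod 2) : Submodule ℂ (E n) where
  carrier := {D | ∀ (q : ZMod 2), ∀ f ∈ lpar n q, D f ∈ lpar n (q + p)}
  add_mem' := by
    intro D F hD hF q f hf
    simpa [LinearMap.add_apply] using (lpar n (q + p)).add_mem (hD q f hf) (hF q f hf)
  zero_mem' := by intro q f hf; simpa using (lpar n (q + p)).zero_mem
  smul_mem' := by
    intro c D hD q f hf
    simpa [LinearMap.smul_apply] using (lpar n (q + p)).smul_mem c (hD q f hf)

/-- Endomorphisms of `Λ(n)` that are ℤ-homogeneous of degree `d`. -/
def edeg (d : ℤ) : Submodule ℂ (E n) where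
  carrier := {D | ∀ (m : ℤ), ∀ f ∈ ldeg n m, D f ∈ ldeg n (m + d)}
  add_mem' := by
    intro D F hD hF m f hf
    simpa [LinearMap.add_apply] using (ldeg n (m + d)).add_mem (hD m f hf) (hF m f hf)
  zero_mem' := by intro m f hf; simpa using (ldeg n (m + d)).zero_mem
  smul_mem' := by
    intro c D hD m f hf
    simpa [LinearMap.smul_apply] using (ldeg n (m + d)).smul_mem c (hD m f hf)

/-- The linear map `(f₁,…,f_n) ↦ ∑ᵢ fᵢ ∂ᵢ`. -/
def Wmap : (Fin n → Lambda n) →ₗ[ℂ] E n where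
  toFun F := ∑ i, mulOp n (F i) * pd n i
  map_add' := by
    intro F G
    simp only [Pi.add_apply, map_add, add_mul, Finset.sum_add_distrib]
  map_smul' := by
    intro c F
    simp only [RingHom.id_apply, Pi.smul_apply, map_smul, smul_mul_assoc, Finset.smul_sum]

/-- The divergence `(f₁,…,f_n) ↦ ∑ᵢ ∂ᵢ(fᵢ)`. -/
def divMap : (Fin n → Lambda n) →ₗ[ℂ] Lambda n where
  toFun F := ∑ i, pd n i (F i)
  map_add' := by
    intro F G
    simp only [Pi.add_apply, map_add, Finset.sum_add_distrib]
  map_smul' := by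
    intro c F
    simp only [RingHom.id_apply, Pi.smul_apply, map_smul, Finset.smul_sum]

/-- The Witt type Lie superalgebra `W(n) = {∑ fᵢ∂ᵢ : fᵢ ∈ Λ(n)}`. -/
def Wn : Submodule ℂ (E n) := LinearMap.range (Wmap n)

/-- Divergence-free coefficient tuples. -/
def divFree : Submodule ℂ (Fin n → Lambda n) := LinearMap.ker (divMap n)

/-- The special type Lie superalgebra `S(n) = {∑ fᵢ∂ᵢ : ∑ ∂ᵢ(fᵢ) = 0}`. -/
def Sn : Submodule ℂ (E n) := (divFree n).map (Wmap n)

/-- The top monomial `ω = x₁x₂⋯x_n`. -/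
def omegaTop : Lambda n := mono n Finset.univ

/-- `1 − x₁x₂⋯x_n`. -/
def oneM : Lambda n := mono n ∅ - omegaTop n

/-- Multiplication of every coefficient by `1 − x₁⋯x_n`. -/
def oneMScale : (Fin n → Lambda n) →ₗ[ℂ] (Fin n → Lambda n) :=
  LinearMap.pi fun i => (mulOp n (oneM n)) ∘ₗ LinearMap.proj i

/-- The Lie superalgebra `S̃(n) = {(1−x₁⋯x_n)∑ fᵢ∂ᵢ : ∑ ∂ᵢ(fᵢ) = 0}` (`n` even). -/
def Stn : Submodule ℂ (E n) := (divFree n).map (Wmap n ∘ₗ oneMScale n)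

/-- The conjugate index `i'`. -/
def cidx (i : Fin n) : Fin n :=
  ⟨if i.val < n / 2 then i.val + n / 2 else if i.val < 2 * (n / 2) then i.val - n / 2 else i.val,
   by have := i.isLt; split_ifs <;> omega⟩

/-- The linear map `f ↦ D_H(f) = (−1)^{|f|} ∑ᵢ ∂ᵢ(f)∂_{i'}` (the sign is implemented by the
parity operator `σ`, so that this is a single linear map agreeing with `D_H` on homogeneous
elements). -/
def DHmap : Lambda n →ₗ[ℂ] E n where
  toFun f := ∑ i, mulOp n (pd n i (par n f)) * pd n (cidx n i)
  map_add' := by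
    intro f g
    simp only [map_add, add_mul, Finset.sum_add_distrib]
  map_smul' := by
    intro c f
    simp only [RingHom.id_apply, map_smul, smul_mul_assoc, Finset.smul_sum]

/-- Evaluation of the top coefficient. -/
def evalTop : Lambda n →ₗ[ℂ] ℂ := LinearMap.proj Finset.univ

/-- The Hamiltonian Lie superalgebra `H(n) = {D_H(f) : f ∈ ⊕_{i=0}^{n−1} Λ(n)_i}`. -/
def Hn : Submodule ℂ (E n) := (LinearMap.ker (evalTop n)).map (DHmap n)

/-- `H̃(n) = {D_H(f) : f ∈ Λ(n)}`. -/
def HtN : Submodule ℂ (E n) := LinearMap.range (DHmap n)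

/-- The degree derivation `𝒞 = ∑ᵢ xᵢ∂ᵢ`. -/
def CC : E n := ∑ i, mulOp n (mono n {i}) * pd n i

/-- The span of the diagonal elements `xᵢ∂ᵢ`. -/
def diagSpan : Submodule ℂ (E n) :=
  Submodule.span ℂ (Set.range fun i : Fin n => mulOp n (mono n {i}) * pd n i)

/-- The four families of Cartan type Lie superalgebras. -/
inductive CT | W | S | St | H
deriving DecidableEq

/-- Validity of the parameter `n` for each family. -/
def CT.valid : CT → ℕ → Prop
  | .W, n => 4 ≤ n
  | .S, n => 4 ≤ n
  | .St, n => 4 ≤ n ∧ Even n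
  | .H, n => 4 < n

/-- The Cartan type Lie superalgebra `L` itself. -/
def CT.algebra : CT → (n : ℕ) → Submodule ℂ (E n)
  | .W, n => Wn n
  | .S, n => Sn n
  | .St, n => Stn n
  | .H, n => Hn n

/-- The extended algebra `L'`: `L' = L` for `W(n)` and `S̃(n)`, `L' = S(n) ⊕ ℂ𝒞` for `S(n)`,
and `L' = H̃(n) ⊕ ℂ𝒞` for `H(n)`. -/
def CT.prime : CT → (n : ℕ) → Submodule ℂ (E n)
  | .W, n => Wn n
  | .S, n => Sn n ⊔ Submodule.span ℂ {CC n}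
  | .St, n => Stn n
  | .H, n => HtN n ⊔ Submodule.span ℂ {CC n}

/-- The top degree `ξ_L` of the ℤ-grading. -/
def CT.xi : CT → (n : ℕ) → ℤ
  | .W, n => (n : ℤ) - 1
  | .S, n => (n : ℤ) - 2
  | .St, n => (n : ℤ) - 2
  | .H, n => (n : ℤ) - 3

/-- The ℤ-grading component `L_j = L ∩ W(n)_j`; for `S̃(n)` the component of degree `−1`
is `span{(1−x₁⋯x_n)∂ᵢ}` instead. -/
def CT.grade (t : CT) (n : ℕ) (j : ℤ) : Submodule ℂ (E n) :=
  match t with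
  | .St =>
      if j = -1 then
        Submodule.span ℂ (Set.range fun i : Fin n => mulOp n (oneM n) * pd n i)
      else Stn n ⊓ edeg n j
  | t => t.algebra n ⊓ edeg n j

/-- The ℤ-grading component `L'_j` of the extended algebra `L'`. -/
def CT.grade' (t : CT) (n : ℕ) (j : ℤ) : Submodule ℂ (E n) :=
  match t with
  | .St => CT.grade .St n j
  | t => t.prime n ⊓ edeg n j

/-- The standard Cartan subalgebra `H_L` of `L`: the part of the diagonal
`span{xᵢ∂ᵢ}` lying in `L`. -/
def CT.cartan (t : CT) (n : ℕ) : Submodule ℂ (E n) := t.algebra n ⊓ diagSpan n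

/-- The weight space of `M ⊆ End Λ(n)` of weight `μ ∈ H_L^*` under the adjoint action
of the standard Cartan subalgebra of `L`. -/
def wtsp (t : CT) (n : ℕ) (M : Submodule ℂ (E n)) (μ : Module.Dual ℂ (t.cartan n)) :
    Submodule ℂ (E n) where
  carrier := {x | x ∈ M ∧ ∀ h : t.cartan n, sbL n h x = μ h • x}
  add_mem' := by
    rintro x y ⟨hx, hx'⟩ ⟨hy, hy'⟩
    exact ⟨M.add_mem hx hy, fun h => by simp [map_add, hx' h, hy' h, smul_add]⟩
  zero_mem' := ⟨M.zero_mem, fun h => by simp⟩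
  smul_mem' := by
    rintro c x ⟨hx, hx'⟩
    exact ⟨M.smul_mem c hx, fun h => by simp [map_smul, hx' h, smul_comm c]⟩

/-- The set of roots of `M` with respect to the standard Cartan subalgebra of `L`:
the nonzero weights with nonzero weight space. -/
def CT.roots (t : CT) (n : ℕ) (M : Submodule ℂ (E n)) : Set (Module.Dual ℂ (t.cartan n)) :=
  {ε | ε ≠ 0 ∧ wtsp t n M ε ≠ ⊥}

/-- The sign `(−1)^p` for `p ∈ ℤ₂`. -/
def sgn (p : ZMod 2) : ℂ := (-1 : ℂ) ^ p.val

/-- `f` is a super-biderivation of `L` of ℤ₂-degree `pf`: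
a bilinear map with `f(L_α, L_β) ⊆ L_{α+β+pf}` satisfying
`f([x,y],z) = (−1)^{|x||f|}[x,f(y,z)] + (−1)^{|y||z|}[f(x,z),y]` and
`f(x,[y,z]) = [f(x,y),z] + (−1)^{(|f|+|x|)|y|}[y,f(x,z)]` for homogeneous `x,y,z ∈ L`.
(The bilinear map is given as a bilinear map on the ambient space `End Λ(n)`;
only its restriction to `L` is relevant.) -/
structure IsSuperBider (L : Submodule ℂ (E n)) (pf : ZMod 2)
    (f : E n →ₗ[ℂ] E n →ₗ[ℂ] E n) : Prop where
  maps : ∀ (α β : ZMod 2), ∀ x ∈ L ⊓ epar n α, ∀ y ∈ L ⊓ epar n β,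
    f x y ∈ L ⊓ epar n (α + β + pf)
  eq1 : ∀ (α β γ : ZMod 2), ∀ x ∈ L ⊓ epar n α, ∀ y ∈ L ⊓ epar n β, ∀ z ∈ L ⊓ epar n γ,
    f (sbL n x y) z = sgn (α * pf) • sbL n x (f y z) + sgn (β * γ) • sbL n (f x z) y
  eq2 : ∀ (α β γ : ZMod 2), ∀ x ∈ L ⊓ epar n α, ∀ y ∈ L ⊓ epar n β, ∀ z ∈ L ⊓ epar n γ,
    f x (sbL n y z) = sbL n (f x y) z + sgn ((pf + α) * β) • sbL n y (f x z)

/-- `D` is a superderivation of `L` of ℤ₂-degree `p`: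
`D(L_α) ⊆ L_{α+p}` and `D([x,y]) = [D(x),y] + (−1)^{|D||x|}[x,D(y)]` for homogeneous
`x, y ∈ L`. (Given as a linear map on the ambient space `End Λ(n)`.) -/
structure IsSuperDer (L : Submodule ℂ (E n)) (p : ZMod 2)
    (D : E n →ₗ[ℂ] E n) : Prop where
  maps : ∀ (α : ZMod 2), ∀ x ∈ L ⊓ epar n α, D x ∈ L ⊓ epar n (α + p)
  leib : ∀ (α β : ZMod 2), ∀ x ∈ L ⊓ epar n α, ∀ y ∈ L ⊓ epar n β,
    D (sbL n x y) = sbL n (D x) y + sgn (p * α) • sbL n x (D y)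

/-- `f ∈ BDer(L)_ε`: the super-biderivation `f` has weight `ε ∈ H_L^*`, i.e.
`f(L_η, L_ζ) ⊆ L_{ε+η+ζ}` for all weights `η, ζ`. -/
def CT.HasWeight (t : CT) (n : ℕ) (f : E n →ₗ[ℂ] E n →ₗ[ℂ] E n)
    (ε : Module.Dual ℂ (t.cartan n)) : Prop :=
  ∀ (η ζ : Module.Dual ℂ (t.cartan n)),
    ∀ x ∈ wtsp t n (t.algebra n) η, ∀ y ∈ wtsp t n (t.algebra n) ζ,
      f x y ∈ wtsp t n (t.algebra n) (ε + η + ζ)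

/-- `f ∈ BDer(L)_i`: the super-biderivation `f` has ℤ-degree `i`, i.e.
`f(L_j, L_k) ⊆ L_{i+j+k}` for all `j, k ∈ ℤ`. -/
def CT.HasDeg (t : CT) (n : ℕ) (f : E n →ₗ[ℂ] E n →ₗ[ℂ] E n) (i : ℤ) : Prop :=
  ∀ (j k : ℤ), ∀ x ∈ t.grade n j, ∀ y ∈ t.grade n k, f x y ∈ t.grade n (i + j + k)

section
variable {n : ℕ}

lemma z2 (p : ZMod 2) : p = 0 ∨ p = 1 := by revert p; decide

@[simp] lemma sgn_zero : sgn 0 = 1 := by simp [sgn]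
@[simp] lemma sgn_one : sgn 1 = -1 := by
  have : (1 : ZMod 2).val = 1 := rfl
  simp [sgn, this]
lemma z2_11 : (1 : ZMod 2) + 1 = 0 := by decide
lemma sgn_add (p q : ZMod 2) : sgn (p + q) = sgn p * sgn q := by
  rcases z2 p with rfl | rfl <;> rcases z2 q with rfl | rfl <;> simp [z2_11]
lemma sgn_mul_self (p : ZMod 2) : sgn p * sgn p = 1 := by
  rcases z2 p with rfl | rfl <;> simp
lemma sgn_ne (p : ZMod 2) : sgn p ≠ 0 := by
  rcases z2 p with rfl | rfl <;> simp

lemma msign_sgn (k : ℕ) : msign k = sgn (k : ZMod 2) := by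
  induction k with
  | zero => simp [msign]
  | succ k ih =>
    push_cast; rw [sgn_add, ← ih, msign, msign, pow_succ]; simp

lemma msign_mul_self (k : ℕ) : msign k * msign k = 1 := by
  rw [msign_sgn, sgn_mul_self]
lemma msign_ne (k : ℕ) : msign k ≠ 0 := by rw [msign_sgn]; exact sgn_ne _
lemma msign_add (k l : ℕ) : msign (k + l) = msign k * msign l := by simp [msign, pow_add]
@[simp] lemma msign_zero : msign 0 = 1 := by simp [msign]
@[simp] lemma msign_one : msign 1 = -1 := by simp [msign]

@[simp] lemma mono_self (S : Finset (Fin n)) : mono n S S = 1 := by simp [mono]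
lemma mono_ne {S T : Finset (Fin n)} (h : T ≠ S) : mono n S T = 0 := by simp [mono, h]

lemma lam_sum (f : Lambda n) : f = ∑ S, f S • mono n S := by
  funext T
  simp [Finset.sum_apply, mono]

lemma lam_span (f : Lambda n) (V : Submodule ℂ (Lambda n)) (h : ∀ S, mono n S ∈ V) : f ∈ V := by
  rw [lam_sum f]
  exact Submodule.sum_mem _ fun S _ => V.smul_mem _ (h S)

lemma E_ext1 {M : Type*} [AddCommGroup M] [Module ℂ M] {D D' : Lambda n →ₗ[ℂ] M}
    (h : ∀ S, D (mono n S) = D' (mono n S)) : D = D' := by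
  refine LinearMap.ext fun f => ?_
  rw [lam_sum f]; simp [h]

lemma E_ext {D D' : E n} (h : ∀ S T, D (mono n S) T = D' (mono n S) T) : D = D' :=
  E_ext1 fun S => funext fun T => h S T

lemma app_sum (D : E n) (f : Lambda n) (T) : D f T = ∑ S, f S * D (mono n S) T := by
  conv_lhs => rw [lam_sum f, map_sum]
  simp [Finset.sum_apply]

@[simp] lemma par_apply (f : Lambda n) (S) : par n f S = msign S.card * f S := rfl

lemma par_mono (S : Finset (Fin n)) : par n (mono n S) = msign S.card • mono n S := by
  funext T
  by_cases h : T = S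
  · subst h; simp
  · simp [mono_ne h]

lemma par_sq : par n * par n = 1 := by
  apply E_ext; intro S T
  simp [← mul_assoc, msign_mul_self]

lemma par_par (f : Lambda n) : par n (par n f) = f := by
  have := congrArg (fun D : E n => D f) (par_sq (n := n)); simpa using this

lemma lpar_iff (f : Lambda n) (p : ZMod 2) : f ∈ lpar n p ↔ par n f = sgn p • f := by
  constructor
  · intro h; funext S
    by_cases hS : (S.card : ZMod 2) = p
    · simp [msign_sgn, hS]
    · simp [h S hS]
  · intro h S hS
    have := congrFun h S
    simp only [par_apply, msign_sgn, Pi.smul_apply, smul_eq_mul] at this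
    rcases z2 p with rfl | rfl <;> rcases z2 (S.card : ZMod 2) with h' | h' <;> rw [h'] at this hS <;>
      simp at this hS
    · linear_combination (-1/2) * this
    · linear_combination (1/2) * this

lemma mono_lpar (S : Finset (Fin n)) : mono n S ∈ lpar n (S.card : ZMod 2) := by
  rw [lpar_iff, par_mono, msign_sgn]

/-- conjugation by parity -/
def cj : E n →ₗ[ℂ] E n where
  toFun D := par n * D * par n
  map_add' := by intro D F; noncomm_ring
  map_smul' := by intro c D; simp

lemma cj_def (D : E n) : cj D = par n * D * par n := rfl

lemma cj_cj (D : E n) : cj (cj D) = D := by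
  simp only [cj_def]
  calc par n * (par n * D * par n) * par n = (par n * par n) * D * (par n * par n) := by noncomm_ring
    _ = D := by simp [par_sq]

lemma cj_mul (D F : E n) : cj (D * F) = cj D * cj F := by
  simp only [cj_def]
  calc par n * (D * F) * par n = par n * D * 1 * F * par n := by noncomm_ring
    _ = par n * D * (par n * par n) * F * par n := by rw [par_sq]
    _ = _ := by noncomm_ring

lemma cj_apply_par (D : E n) (f : Lambda n) : cj D (par n f) = par n (D f) := by
  simp [cj_def, par_par]

lemma epar_iff (D : E n) (p : ZMod 2) : D ∈ epar n p ↔ cj D = sgn p • D := by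
  constructor
  · intro h
    apply E_ext1; intro S
    have h1 := (lpar_iff _ _).1 (h _ _ (mono_lpar S))
    have : cj D (mono n S) = msign S.card • par n (D (mono n S)) := by
      simp only [cj_def, Module.End.mul_apply, par_mono, map_smul]
    rw [this, h1, smul_smul, msign_sgn, sgn_add, ← mul_assoc, sgn_mul_self, one_mul]; rfl
  · intro h q f hf
    rw [lpar_iff] at hf ⊢
    have := cj_apply_par D f
    rw [← this, h, hf, sgn_add]
    simp [smul_smul, mul_comm]

/-- even / odd parts -/
def evp : E n →ₗ[ℂ] E n := (2:ℂ)⁻¹ • (LinearMap.id + cj)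
def odp : E n →ₗ[ℂ] E n := (2:ℂ)⁻¹ • (LinearMap.id - cj)

lemma evp_def (D : E n) : evp D = (2:ℂ)⁻¹ • (D + cj D) := rfl
lemma odp_def (D : E n) : odp D = (2:ℂ)⁻¹ • (D - cj D) := rfl

lemma ev_add_od (D : E n) : evp D + odp D = D := by
  rw [evp_def, odp_def]; module

lemma evp_mem (D : E n) : evp D ∈ epar n 0 := by
  rw [epar_iff, evp_def]; simp [cj_cj, add_comm]
lemma odp_mem (D : E n) : odp D ∈ epar n 1 := by
  rw [epar_iff, odp_def]; simp only [map_smul, map_sub, cj_cj, sgn_one]; module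

lemma sbL_def (x y : E n) : sbL n x y =
    x * y - (2:ℂ)⁻¹ • ((y + cj y) * x + (y - cj y) * cj x) := rfl

lemma sb_hom {p q : ZMod 2} {x y : E n} (hx : x ∈ epar n p) (hy : y ∈ epar n q) :
    sbL n x y = x * y - sgn (p * q) • (y * x) := by
  rw [epar_iff] at hx hy
  rw [sbL_def, hx, hy]
  rcases z2 p with rfl | rfl <;> rcases z2 q with rfl | rfl <;>
    simp only [sgn_zero, sgn_one, mul_zero, zero_mul, one_mul, add_mul, sub_mul, smul_mul_assoc, mul_smul_comm] <;> module

lemma sb_ev {x : E n} (hx : x ∈ epar n 0) (y : E n) : sbL n x y = x * y - y * x := by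
  rw [epar_iff] at hx
  rw [sbL_def, hx]
  simp only [sgn_zero, add_mul, sub_mul, smul_mul_assoc, mul_smul_comm]; module

lemma sb_ev' {y : E n} (hy : y ∈ epar n 0) (x : E n) : sbL n x y = x * y - y * x := by
  rw [epar_iff] at hy
  rw [sbL_def, hy]
  simp only [sgn_zero, add_mul, sub_mul, smul_mul_assoc, mul_smul_comm]; module

lemma epar_mul {p q : ZMod 2} {x y : E n} (hx : x ∈ epar n p) (hy : y ∈ epar n q) :
    x * y ∈ epar n (p + q) := by
  rw [epar_iff] at *
  rw [cj_mul, hx, hy, sgn_add]; simp [smul_smul, mul_comm]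

lemma epar_sb {p q : ZMod 2} {x y : E n} (hx : x ∈ epar n p) (hy : y ∈ epar n q) :
    sbL n x y ∈ epar n (p + q) := by
  rw [sb_hom hx hy]
  refine Submodule.sub_mem _ (epar_mul hx hy) (Submodule.smul_mem _ _ ?_)
  rw [add_comm]; exact epar_mul hy hx

lemma cj_sb (x y : E n) : cj (sbL n x y) = sbL n (cj x) (cj y) := by
  simp only [sbL_def, map_sub, map_smul, map_add, cj_mul]

lemma sb_skew {p q : ZMod 2} {x y : E n} (hx : x ∈ epar n p) (hy : y ∈ epar n q) :
    sbL n x y = -(sgn (p * q) • sbL n y x) := by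
  rw [sb_hom hx hy, sb_hom hy hx, mul_comm q p, smul_sub, smul_smul, sgn_mul_self]; module

lemma jacobi {p q r : ZMod 2} {x y z : E n} (hx : x ∈ epar n p) (hy : y ∈ epar n q)
    (hz : z ∈ epar n r) :
    sbL n (sbL n x y) z = sbL n x (sbL n y z) - sgn (p * q) • sbL n y (sbL n x z) := by
  rw [sb_hom (epar_sb hx hy) hz, sb_hom hx (epar_sb hy hz), sb_hom hy (epar_sb hx hz),
    sb_hom hx hy, sb_hom hy hz, sb_hom hx hz]
  rcases z2 p with rfl | rfl <;> rcases z2 q with rfl | rfl <;> rcases z2 r with rfl | rfl <;>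
    simp only [sgn_zero, sgn_one, mul_zero, zero_mul, one_mul, z2_11, add_zero, zero_add, sub_mul,
      mul_sub, smul_mul_assoc, mul_smul_comm, smul_sub, smul_smul, ← mul_assoc] <;> module

lemma jacobi' {p q : ZMod 2} {x y : E n} (hx : x ∈ epar n p) (hy : y ∈ epar n q) (z : E n) :
    sbL n (sbL n x y) z = sbL n x (sbL n y z) - sgn (p * q) • sbL n y (sbL n x z) := by
  rw [← ev_add_od z]
  simp only [map_add]
  rw [jacobi hx hy (evp_mem z), jacobi hx hy (odp_mem z)]
  module

/-! ### torus -/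

/-- diagonal operator -/
def hd : (Fin n → ℂ) →ₗ[ℂ] E n where
  toFun a :=
    { toFun := fun f S => (∑ i ∈ S, a i) * f S
      map_add' := by intro f g; funext S; simp [mul_add]
      map_smul' := by intro c f; funext S; simp; ring }
  map_add' := by
    intro a b; apply LinearMap.ext; intro f; funext S
    simp [Finset.sum_add_distrib, add_mul]
  map_smul' := by
    intro c a; apply LinearMap.ext; intro f; funext S
    simp [← Finset.mul_sum, mul_assoc]

@[simp] lemma hd_apply (a : Fin n → ℂ) (f : Lambda n) (S) : hd a f S = (∑ i ∈ S, a i) * f S := rfl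

lemma hd_mono (a : Fin n → ℂ) (S : Finset (Fin n)) :
    hd a (mono n S) = (∑ i ∈ S, a i) • mono n S := by
  funext T
  by_cases h : T = S
  · subst h; simp
  · simp [mono_ne h]

lemma hd_even (a : Fin n → ℂ) : hd a ∈ epar n 0 := by
  intro q f hf S hS
  simp [hf S (by simpa using hS)]

variable (A : Submodule ℂ (Fin n → ℂ))

/-- weight of a monomial -/
def wtS (S : Finset (Fin n)) : Module.Dual ℂ A where
  toFun a := ∑ i ∈ S, (a : Fin n → ℂ) i
  map_add' := by intro a b; simp [Finset.sum_add_distrib]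
  map_smul' := by intro c a; simp [Finset.mul_sum]

@[simp] lemma wtS_apply (S : Finset (Fin n)) (a : A) : wtS A S a = ∑ i ∈ S, (a : Fin n → ℂ) i := rfl

def IsWt (μ : Module.Dual ℂ A) (D : E n) : Prop := ∀ a : A, sbL n (hd a) D = μ a • D

variable {A}

lemma hd_br_entry (a : Fin n → ℂ) (D : E n) (S T) :
    sbL n (hd a) D (mono n S) T = (∑ i ∈ T, a i - ∑ i ∈ S, a i) * D (mono n S) T := by
  rw [sb_ev (hd_even a)]
  simp [hd_mono, sub_mul]

lemma isWt_iff (μ : Module.Dual ℂ A) (D : E n) :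
    IsWt A μ D ↔ ∀ S T, D (mono n S) T ≠ 0 → wtS A T = wtS A S + μ := by
  constructor
  · intro h S T hne
    ext a
    have h1 := congrArg (fun X : E n => X (mono n S) T) (h a)
    simp only [hd_br_entry, LinearMap.smul_apply, Pi.smul_apply, smul_eq_mul] at h1
    have := mul_right_cancel₀ hne h1
    simp only [wtS_apply, LinearMap.add_apply]
    linear_combination this
  · intro h a
    apply E_ext; intro S T
    rw [hd_br_entry]
    by_cases hne : D (mono n S) T = 0
    · simp [hne]
    · have := congrArg (fun l : Module.Dual ℂ A => l a) (h S T hne)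
      simp only [wtS_apply, LinearMap.add_apply] at this
      simp [this]

open Classical in
/-- projection onto a weight space -/
def pr (μ : Module.Dual ℂ A) : E n →ₗ[ℂ] E n where
  toFun D :=
    { toFun := fun f T => ∑ S, if wtS A T = wtS A S + μ then D (mono n S) T * f S else 0
      map_add' := by
        intro f g; funext T
        simp only [Pi.add_apply, ← Finset.sum_add_distrib]
        exact Finset.sum_congr rfl fun S _ => by split_ifs <;> simp [mul_add]
      map_smul' := by
        intro c f; funext T
        simp only [Pi.smul_apply, smul_eq_mul, RingHom.id_apply, Finset.mul_sum]
        exact Finset.sum_congr rfl fun S _ => by split_ifs <;> ring }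
  map_add' := by
    intro D F; apply LinearMap.ext; intro f; funext T
    simp only [LinearMap.add_apply, Pi.add_apply, LinearMap.coe_mk, AddHom.coe_mk,
      ← Finset.sum_add_distrib]
    exact Finset.sum_congr rfl fun S _ => by split_ifs <;> simp [add_mul]
  map_smul' := by
    intro c D; apply LinearMap.ext; intro f; funext T
    simp only [LinearMap.smul_apply, Pi.smul_apply, LinearMap.coe_mk, AddHom.coe_mk, smul_eq_mul,
      RingHom.id_apply, Finset.mul_sum]
    exact Finset.sum_congr rfl fun S _ => by split_ifs <;> simp [mul_assoc]

open Classical in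
lemma pr_entry (μ : Module.Dual ℂ A) (D : E n) (S T) :
    pr μ D (mono n S) T = if wtS A T = wtS A S + μ then D (mono n S) T else 0 := by
  show (∑ S', if wtS A T = wtS A S' + μ then D (mono n S') T * mono n S S' else 0) = _
  rw [Finset.sum_eq_single S]
  · simp
  · intro b _ hb; simp [mono_ne hb]
  · simp

lemma pr_isWt (μ : Module.Dual ℂ A) (D : E n) : IsWt A μ (pr μ D) := by
  rw [isWt_iff]; intro S T h
  rw [pr_entry] at h
  by_contra hc; simp [hc] at h

lemma pr_same {μ : Module.Dual ℂ A} {D : E n} (h : IsWt A μ D) : pr μ D = D := by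
  rw [isWt_iff] at h
  apply E_ext; intro S T; rw [pr_entry]
  split_ifs with h1
  · rfl
  · by_contra hc; exact h1 (h S T (Ne.symm hc))

lemma pr_other {μ ν : Module.Dual ℂ A} {D : E n} (h : IsWt A μ D) (hne : ν ≠ μ) : pr ν D = 0 := by
  rw [isWt_iff] at h
  apply E_ext; intro S T; rw [pr_entry]
  split_ifs with h1
  · by_contra hc
    have := h S T hc
    rw [h1] at this
    exact hne (add_left_cancel this)
  · rfl

lemma pr_cj (μ : Module.Dual ℂ A) (D : E n) : pr μ (cj D) = cj (pr μ D) := by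
  apply E_ext; intro S T
  have : ∀ D : E n, cj D (mono n S) T = msign S.card * msign T.card * D (mono n S) T := by
    intro D; simp [cj_def, par_mono]; ring
  rw [pr_entry, this, this, pr_entry]
  split_ifs <;> simp

open Classical in
variable (A) in
def wts : Finset (Module.Dual ℂ A) :=
  Finset.univ.image fun ST : Finset (Fin n) × Finset (Fin n) => wtS A ST.2 - wtS A ST.1

lemma pr_sum (D : E n) : D = ∑ μ ∈ wts A, pr μ D := by
  classical
  apply E_ext; intro S T
  rw [LinearMap.sum_apply, Finset.sum_apply]
  rw [Finset.sum_eq_single (wtS A T - wtS A S)]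
  · rw [pr_entry]; simp
  · intro b _ hb; rw [pr_entry, if_neg]; intro h; apply hb; rw [h]; abel
  · intro h; exact absurd (Finset.mem_image.2 ⟨(S, T), by simp⟩) h

lemma pr_notin {μ : Module.Dual ℂ A} (h : μ ∉ wts A) (D : E n) : pr μ D = 0 := by
  classical
  apply E_ext; intro S T
  rw [pr_entry, if_neg]; · rfl
  intro h'; exact h (Finset.mem_image.2 ⟨(S, T), by simp [h']⟩)

lemma isWt_add {μ : Module.Dual ℂ A} {x y : E n} (hx : IsWt A μ x) (hy : IsWt A μ y) :
    IsWt A μ (x + y) := fun a => by simp [hx a, hy a]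
lemma isWt_smul {μ : Module.Dual ℂ A} {x : E n} (c : ℂ) (hx : IsWt A μ x) :
    IsWt A μ (c • x) := fun a => by rw [map_smul, hx a, smul_comm]
lemma isWt_zero {μ : Module.Dual ℂ A}  :
    IsWt A μ (0 : E n) := fun a => by simp
lemma isWt_sum {ι : Type*} {μ : Module.Dual ℂ A} (s : Finset ι) (g : ι → E n) (h : ∀ i ∈ s, IsWt A μ (g i)) :
    IsWt A μ (∑ i ∈ s, g i) := fun a => by
  rw [map_sum, Finset.smul_sum]; exact Finset.sum_congr rfl fun i hi => h i hi a

/-- weight additivity -/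
lemma isWt_sb {p : ZMod 2} {α β : Module.Dual ℂ A} {x y : E n} (hp : x ∈ epar n p) (hx : IsWt A α x)
    (hy : IsWt A β y) : IsWt A (α + β) (sbL n x y) := by
  intro a
  have := jacobi' (hd_even (a : Fin n → ℂ)) hp y
  rw [hx a, hy a] at this
  simp only [zero_mul, sgn_zero, one_smul, map_smul, LinearMap.smul_apply] at this
  rw [LinearMap.add_apply, add_smul, this]; abel

lemma pr_sb {p : ZMod 2} {α : Module.Dual ℂ A} {x : E n} (hp : x ∈ epar n p) (hx : IsWt A α x)
    (μ : Module.Dual ℂ A) (y : E n) : pr (α + μ) (sbL n x y) = sbL n x (pr μ y) := by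
  conv_lhs => rw [pr_sum (A := A) y]
  rw [map_sum, map_sum]
  by_cases h : μ ∈ wts A
  · rw [Finset.sum_eq_single μ]
    · exact pr_same (isWt_sb hp hx (pr_isWt _ _))
    · intro b _ hb
      exact pr_other (isWt_sb hp hx (pr_isWt _ _)) (by simpa using hb.symm)
    · intro h'; exact absurd h h'
  · rw [pr_notin h, map_zero]
    apply Finset.sum_eq_zero; intro b hb
    exact pr_other (isWt_sb hp hx (pr_isWt _ _)) (by rintro h'; rw [add_left_cancel h'] at h; exact h hb)

/-- pr preserves parity -/
lemma pr_epar {p : ZMod 2} {x : E n} (hp : x ∈ epar n p) (μ : Module.Dual ℂ A) : pr μ x ∈ epar n p := by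
  rw [epar_iff] at *
  rw [← pr_cj, hp, map_smul]

lemma pr_sb' {p q : ZMod 2} {α : Module.Dual ℂ A} {x y : E n} (hp : x ∈ epar n p) (hx : IsWt A α x)
    (μ : Module.Dual ℂ A) (hy : y ∈ epar n q) : pr (α + μ) (sbL n y x) = sbL n (pr μ y) x := by
  rw [sb_skew hy hp, map_neg, map_smul, pr_sb hp hx, sb_skew (pr_epar hy μ) hp]

lemma wt_unique {α β : Module.Dual ℂ A} {x : E n} (h0 : x ≠ 0) (h1 : IsWt A α x) (h2 : IsWt A β x) : α = β := by
  ext a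
  have := (h1 a).symm.trans (h2 a)
  exact smul_left_injective _ h0 this

lemma hd_isWt (a : Fin n → ℂ) : IsWt A 0 (hd a) := by
  rw [isWt_iff]; intro S T h
  rw [hd_mono] at h
  have : T = S := by by_contra hc; simp [mono_ne hc] at h
  simp [this]

end

section
variable {n : ℕ}

structure Good (L : Submodule ℂ (E n)) (A : Submodule ℂ (Fin n → ℂ)) : Prop where
  br : ∀ x ∈ L, ∀ y ∈ L, sbL n x y ∈ L
  prj : ∀ (μ : Module.Dual ℂ A), ∀ x ∈ L, pr μ x ∈ L
  cjm : ∀ x ∈ L, cj x ∈ L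
  hdm : ∀ a : A, hd (a : Fin n → ℂ) ∈ L

structure Hom (L : Submodule ℂ (E n)) (A : Submodule ℂ (Fin n → ℂ)) (μ : Module.Dual ℂ A)
    (p : ZMod 2) (x : E n) : Prop where
  mem : x ∈ L
  par : x ∈ epar n p
  wt : IsWt A μ x

def off {A : Submodule ℂ (Fin n → ℂ)} (ν α : Module.Dual ℂ A) : Prop := ∃ a, ν a = 0 ∧ α a ≠ 0

variable {L : Submodule ℂ (E n)} {A : Submodule ℂ (Fin n → ℂ)}

lemma off_or {α α' : Module.Dual ℂ A} (ν : Module.Dual ℂ A) (a1 a2 : A) (h1 : α a1 ≠ 0) (h1' : α' a1 = 0)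
    (h2 : α a2 = 0) (h2' : α' a2 ≠ 0) : off ν α ∨ off ν α' := by
  by_cases hc : ν a1 = 0
  · exact Or.inl ⟨a1, hc, h1⟩
  · right
    refine ⟨ν a1 • a2 - ν a2 • a1, by simp; ring, ?_⟩
    simp [h1', h2', hc]

lemma Hom.sb (G : Good L A) {α β : Module.Dual ℂ A} {p q : ZMod 2} {x y : E n}
    (hx : Hom L A α p x) (hy : Hom L A β q y) : Hom L A (α + β) (p + q) (sbL n x y) :=
  ⟨G.br _ hx.mem _ hy.mem, epar_sb hx.par hy.par, isWt_sb hx.par hx.wt hy.wt⟩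

lemma Hom.hd (G : Good L A) (a : A) : Hom L A 0 0 (CartanSuper.hd (a : Fin n → ℂ)) :=
  ⟨G.hdm a, hd_even _, hd_isWt _⟩

lemma Hom.hd_sb (G : Good L A) (a : A) {β : Module.Dual ℂ A} {q : ZMod 2} {y : E n} (hy : Hom L A β q y) :
    sbL n y (CartanSuper.hd (a : Fin n → ℂ)) = - (β a • y) := by
  rw [sb_skew hy.par (hd_even _), mul_zero, sgn_zero, one_smul, hy.wt a]

lemma Hom.i {α : Module.Dual ℂ A} {p : ZMod 2} {x : E n} (h : Hom L A α p x) : x ∈ L ⊓ epar n p :=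
  ⟨h.mem, h.par⟩

/-- Every element is in the span of homogeneous vectors. -/
lemma hom_span (G : Good L A) {x : E n} (hx : x ∈ L) (V : Submodule ℂ (E n))
    (h : ∀ α p y, Hom L A α p y → y ∈ V) : x ∈ V := by
  rw [← ev_add_od x]
  have key : ∀ p (z : E n), z ∈ L → z ∈ epar n p → z ∈ V := by
    intro p z hz hp
    rw [pr_sum (A := A) z]
    exact Submodule.sum_mem _ fun μ _ => h μ p _ ⟨G.prj _ _ hz, pr_epar hp _, pr_isWt _ _⟩
  refine V.add_mem (key 0 _ ?_ (evp_mem x)) (key 1 _ ?_ (odp_mem x))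
  · exact L.smul_mem _ (L.add_mem hx (G.cjm _ hx))
  · exact L.smul_mem _ (L.sub_mem hx (G.cjm _ hx))

lemma center_hom (G : Good L A) {z : E n} (hz : ∀ α p y, Hom L A α p y → sbL n y z = 0) :
    ∀ y ∈ L, sbL n y z = 0 := by
  intro y hy
  exact hom_span G hy (LinearMap.ker ((sbL n).flip z)) (fun α p y h => by simpa using hz α p y h)

variable {pf : ZMod 2} {f : E n →ₗ[ℂ] E n →ₗ[ℂ] E n}

/-- H2 -/
def OffSep (L : Submodule ℂ (E n)) (A : Submodule ℂ (Fin n → ℂ)) : Prop :=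
  ∀ ν : Module.Dual ℂ A, ∀ z ∈ L, (∀ α p u, Hom L A α p u → off ν α → sbL n u z = 0) → z = 0

/-- f of weight zero -/
def WtZero (L : Submodule ℂ (E n)) (A : Submodule ℂ (Fin n → ℂ)) (f : E n →ₗ[ℂ] E n →ₗ[ℂ] E n) : Prop :=
  ∀ α p x β q y, Hom L A α p x → Hom L A β q y → IsWt A (α + β) (f x y)

lemma wtZero (G : Good L A) (H2 : OffSep L A) (hf : IsSuperBider n L pf f) : WtZero L A f := by
  have main : ∀ ν : Module.Dual ℂ A, ν ≠ 0 → ∀ α p x β q y, Hom L A α p x → Hom L A β q y →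
      pr (α + β + ν) (f x y) = 0 := by
    intro ν hν
    obtain ⟨a0, ha0⟩ : ∃ a, ν a ≠ 0 := by
      by_contra hc; push Not at hc; exact hν (LinearMap.ext hc)
    have Fm : ∀ α p x β q y, Hom L A α p x → Hom L A β q y →
        Hom L A (α + β + ν) (p + q + pf) (pr (α + β + ν) (f x y)) := by
      intro α p x β q y hx hy
      have := hf.maps p q x hx.i y hy.i
      exact ⟨G.prj _ _ this.1, pr_epar this.2 _, pr_isWt _ _⟩
    have fp : ∀ {α p x β q y}, Hom L A α p x → Hom L A β q y → f x y ∈ epar n (p + q + pf) :=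
      fun hx hy => (hf.maps _ _ _ hx.i _ hy.i).2
    have Fh : ∀ (a : A) β q y, Hom L A β q y → Hom L A (β + ν) (q + pf) (pr (β + ν) (f (hd (a : Fin n → ℂ)) y)) := by
      intro a β q y hy
      have := Fm 0 0 _ β q y (Hom.hd G a) hy
      simpa using this
    -- (2')
    have e2' : ∀ (a a' : A) β q y, Hom L A β q y →
        (β + ν) a • pr (β + ν) (f (hd (a' : Fin n → ℂ)) y) = (β + ν) a' • pr (β + ν) (f (hd (a : Fin n → ℂ)) y) := by
      intro a a' β q y hy
      have h := hf.eq1 0 0 q _ (Hom.hd G a).i _ (Hom.hd G a').i y hy.i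
      have h0 : sbL n (hd (a : Fin n → ℂ)) (hd (a' : Fin n → ℂ)) = 0 := by
        have := hd_isWt (A := A) (a' : Fin n → ℂ) a; simpa using this
      rw [h0] at h
      have h' := congrArg (pr (0 + (β + ν))) h
      simp only [map_zero, LinearMap.zero_apply, map_add, map_smul, zero_mul, sgn_zero, one_smul] at h'
      rw [pr_sb (hd_even _) (hd_isWt _), pr_sb' (hd_even _) (hd_isWt _) _ (fp (Hom.hd G a) hy)] at h'
      rw [(pr_isWt (β + ν) _) a, Hom.hd_sb G a' (Fh a β q y hy)] at h'
      exact eq_of_sub_eq_zero (by rw [sub_eq_add_neg]; exact h'.symm)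
    have e1 : ∀ (a a' : A) β q y, Hom L A β q y →
        -(ν a') • pr (β + ν) (f (hd (a : Fin n → ℂ)) y)
          = sbL n (pr ν (f (hd (a : Fin n → ℂ)) (hd (a' : Fin n → ℂ)))) y := by
      intro a a' β q y hy
      have h := hf.eq2 0 0 q _ (Hom.hd G a).i _ (Hom.hd G a').i y hy.i
      rw [hy.wt a'] at h
      have h' := congrArg (pr (β + ν)) h
      simp only [map_add, map_smul, mul_zero, sgn_zero, one_smul] at h'
      rw [pr_sb' hy.par hy.wt _ (fp (Hom.hd G a) (Hom.hd G a'))] at h'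
      have h2 := pr_sb (hd_even (a' : Fin n → ℂ)) (hd_isWt (A := A) (a' : Fin n → ℂ)) (β + ν) (f (hd (a : Fin n → ℂ)) y)
      rw [zero_add] at h2
      rw [h2, (pr_isWt (β + ν) _) a', LinearMap.add_apply] at h'
      rw [← sub_eq_iff_eq_add] at h'
      rw [← h']; module
    have e2 : ∀ (a : A) α p x β q y, Hom L A α p x → Hom L A β q y →
        -((β + ν) a) • pr (α + β + ν) (f x y)
          = sgn (p * q) • sbL n (pr (β + ν) (f (hd (a : Fin n → ℂ)) y)) x := by
      intro a α p x β q y hx hy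
      have h := hf.eq1 0 p q _ (Hom.hd G a).i x hx.i y hy.i
      rw [hx.wt a] at h
      have h' := congrArg (pr (α + (β + ν))) h
      simp only [map_add, map_smul, zero_mul, sgn_zero, one_smul, LinearMap.smul_apply] at h'
      rw [pr_sb' hx.par hx.wt _ (fp (Hom.hd G a) hy)] at h'
      have h2 := pr_sb (hd_even (a : Fin n → ℂ)) (hd_isWt (A := A) (a : Fin n → ℂ)) (α + (β + ν)) (f x y)
      rw [zero_add] at h2
      rw [h2, (pr_isWt (α + (β + ν)) _) a] at h'
      rw [← sub_eq_iff_eq_add'] at h'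
      rw [← h', add_assoc]; simp only [LinearMap.add_apply]; module
    have k1 : ∀ a a' : A, ν a = 0 → pr ν (f (hd (a : Fin n → ℂ)) (hd (a' : Fin n → ℂ))) = 0 := by
      intro a a' ha
      have := e2' a0 a 0 0 _ (Hom.hd G a')
      rw [zero_add, ha, zero_smul, smul_eq_zero] at this
      exact this.resolve_left ha0
    have k2 : ∀ a : A, ν a = 0 → ∀ β q y, Hom L A β q y → pr (β + ν) (f (hd (a : Fin n → ℂ)) y) = 0 := by
      intro a ha β q y hy
      have := e1 a a0 β q y hy
      rw [k1 a a0 ha] at this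
      simpa [ha0] using this
    have k3 : ∀ α p x β q y, Hom L A α p x → Hom L A β q y → off ν β → pr (α + β + ν) (f x y) = 0 := by
      rintro α p x β q y hx hy ⟨a, ha, hb⟩
      have := e2 a α p x β q y hx hy
      rw [k2 a ha β q y hy] at this
      simpa [ha, hb] using this
    intro α p x β q y hx hy
    by_cases hoff : off ν β
    · exact k3 _ _ _ _ _ _ hx hy hoff
    apply H2 ν _ (Fm α p x β q y hx hy).mem
    intro γ r u hu hou
    obtain ⟨a, ha, hua⟩ := hou
    have hβ : β a = 0 := by by_contra hc; exact hoff ⟨a, ha, hc⟩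
    have h1 := k3 α p x (γ + β) (r + q) _ hx (hu.sb G hy) ⟨a, ha, by simpa [hβ] using hua⟩
    rw [hf.eq2 p r q x hx.i u hu.i y hy.i, map_add, map_smul] at h1
    have h2 : α + (γ + β) + ν = β + (α + γ + ν) := by abel
    have h3 : α + (γ + β) + ν = γ + (α + β + ν) := by abel
    rw [h3, pr_sb hu.par hu.wt, ← h3, h2, pr_sb' hy.par hy.wt _ (fp hx hu),
      k3 α p x γ r u hx hu ⟨a, ha, hua⟩] at h1
    simpa [sgn_ne] using h1
  intro α p x β q y hx hy
  rw [pr_sum (A := A) (f x y)]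
  apply isWt_sum
  intro μ _
  by_cases h : μ = α + β
  · subst h; exact pr_isWt _ _
  · have := main (μ - (α + β)) (sub_ne_zero.2 h) α p x β q y hx hy
    rw [add_sub_cancel] at this
    rw [this]; exact isWt_zero

def Gd (L : Submodule ℂ (E n)) (A : Submodule ℂ (Fin n → ℂ)) (f : E n →ₗ[ℂ] E n →ₗ[ℂ] E n) (κ : ℂ) (y : E n) : Prop :=
  ∀ α p x, Hom L A α p x → f x y = κ • sbL n x y

lemma f_e2' (G : Good L A) (hf : IsSuperBider n L pf f) (hw : WtZero L A f) (a a' : A) {β q y} (hy : Hom L A β q y) :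
    β a • (f (hd (a' : Fin n → ℂ)) y) = β a' • (f (hd (a : Fin n → ℂ)) y) := by
  have h := hf.eq1 0 0 q _ (Hom.hd G a).i _ (Hom.hd G a').i y hy.i
  have h0 : sbL n (hd (a : Fin n → ℂ)) (hd (a' : Fin n → ℂ)) = 0 := by
    have := hd_isWt (A := A) (a' : Fin n → ℂ) a; simpa using this
  have w1 := hw _ _ _ _ _ _ (Hom.hd G a') hy
  have w2 := hw _ _ _ _ _ _ (Hom.hd G a) hy
  have m2 := hf.maps _ _ _ (Hom.hd G a).i y hy.i
  rw [zero_add] at w1 w2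
  rw [h0] at h
  rw [w1 a, Hom.hd_sb G a' ⟨m2.1, m2.2, w2⟩] at h
  simp only [map_zero, LinearMap.zero_apply, zero_mul, sgn_zero, one_smul] at h
  exact eq_of_sub_eq_zero (by rw [sub_eq_add_neg]; exact h.symm)

lemma f_e2 (G : Good L A) (hf : IsSuperBider n L pf f) (hw : WtZero L A f) (a : A) {α p x β q y}
    (hx : Hom L A α p x) (hy : Hom L A β q y) :
    -(β a) • f x y = sgn (p * q) • sbL n (f (hd (a : Fin n → ℂ)) y) x := by
  have h := hf.eq1 0 p q _ (Hom.hd G a).i x hx.i y hy.i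
  rw [hx.wt a, (hw _ _ _ _ _ _ hx hy) a] at h
  simp only [map_smul, zero_mul, sgn_zero, one_smul, LinearMap.smul_apply, LinearMap.add_apply] at h
  rw [← sub_eq_iff_eq_add'] at h
  rw [← h]; module

lemma f_h_zero (G : Good L A) (hf : IsSuperBider n L pf f) (hw : WtZero L A f) (a : A) {β q y}
    (hy : Hom L A β q y) (ha : β a = 0) (hb : β ≠ 0) : f (hd (a : Fin n → ℂ)) y = 0 := by
  obtain ⟨a0, ha0⟩ : ∃ a, β a ≠ 0 := by
      by_contra hc; push Not at hc; exact hb (LinearMap.ext hc)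
  have := f_e2' G hf hw a a0 hy
  rw [ha, zero_smul] at this
  exact (smul_eq_zero.1 this.symm).resolve_left ha0

lemma gd_base (G : Good L A) (hf : IsSuperBider n L pf f) (hw : WtZero L A f) (a : A) {β q y}
    (hy : Hom L A β q y) (ha : β a ≠ 0) {κ : ℂ} (h : f (hd (a : Fin n → ℂ)) y = (κ * β a) • y) :
    Gd L A f κ y := by
  intro α p x hx
  have h2 := f_e2 G hf hw a hx hy
  have h3 : (-(β a)) • f x y = (-(β a)) • (κ • sbL n x y) := by
    rw [h2, h, sb_skew hx.par hy.par, map_smul, LinearMap.smul_apply]; module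
  exact smul_right_injective _ (neg_ne_zero.2 ha) h3

lemma gd_prop (G : Good L A) (hf : IsSuperBider n L pf f) (hw : WtZero L A f) (a : A) {β q y β' q' y'}
    {κ : ℂ} (hκ : pf = 0 ∨ κ = 0)
    (hy : Hom L A β q y) (hy' : Hom L A β' q' y') (ha : β a = 0) (hb : β ≠ 0) (ha' : β' a ≠ 0)
    (h : Gd L A f κ y') : Gd L A f κ (sbL n y y') := by
  refine gd_base G hf hw a (hy.sb G hy') (by simpa [ha] using ha') ?_
  rw [hf.eq2 _ _ _ _ (Hom.hd G a).i y hy.i y' hy'.i, f_h_zero G hf hw a hy ha hb,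
    h _ _ _ (Hom.hd G a), hy'.wt a]
  rcases hκ with rfl | rfl
  · simp [ha, smul_smul]
  · simp

/-- initial: if f(h,e) is a multiple of e -/
lemma gd_init (G : Good L A) (hf : IsSuperBider n L pf f) (hw : WtZero L A f) (a : A) {β q y}
    (hy : Hom L A β q y) (ha : β a ≠ 0) (h : ∃ c : ℂ, f (hd (a : Fin n → ℂ)) y = c • y) :
    ∃ κ, (pf = 0 ∨ κ = 0) ∧ Gd L A f κ y := by
  obtain ⟨c, hc⟩ := h
  rcases z2 pf with rfl | rfl
  · exact ⟨c / β a, Or.inl rfl, gd_base G hf hw a hy ha (by rw [hc]; field_simp)⟩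
  · refine ⟨0, Or.inr rfl, gd_base G hf hw a hy ha ?_⟩
    have m := (hf.maps _ _ _ (Hom.hd G a).i y hy.i).2
    have m2 := hy.par
    rw [hc] at m
    replace m := (epar_iff _ _).1 m
    rw [epar_iff] at m2
    rw [map_smul, m2, zero_add, sgn_add, sgn_one] at m
    rw [hc, zero_mul, zero_smul]
    have : (2 * sgn q) • (c • y) = 0 := by
      rw [← sub_eq_zero] at m; rw [← m]; module
    exact (smul_eq_zero.1 this).resolve_left (mul_ne_zero two_ne_zero (sgn_ne _))

/-- flip -/
def flp (f : E n →ₗ[ℂ] E n →ₗ[ℂ] E n) : E n →ₗ[ℂ] E n →ₗ[ℂ] E n :=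
  (f ∘ₗ evp).flip + (f ∘ₗ odp).flip ∘ₗ cj

lemma flp_apply (f : E n →ₗ[ℂ] E n →ₗ[ℂ] E n) {p q : ZMod 2} {x y : E n} (hx : x ∈ epar n p) (hy : y ∈ epar n q) :
    flp f x y = sgn (p * q) • f y x := by
  rw [epar_iff] at hx hy
  simp only [flp, LinearMap.add_apply, LinearMap.flip_apply, LinearMap.comp_apply, evp_def, odp_def, hx, hy]
  rcases z2 q with rfl | rfl
  · have : (2:ℂ)⁻¹ • (y + (1:ℂ) • y) = y := by module
    rw [sgn_zero, this]; simp
  · have : (2:ℂ)⁻¹ • (y - (-1:ℂ) • y) = y := by module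
    rw [sgn_one, this]; simp

lemma flp_bider (G : Good L A) (hf : IsSuperBider n L pf f) : IsSuperBider n L pf (flp f) := by
  refine ⟨?_, ?_, ?_⟩
  · intro α β x hx y hy
    rw [flp_apply f hx.2 hy.2, add_comm α β]
    exact Submodule.smul_mem _ _ (hf.maps _ _ _ hy _ hx)
  · intro p q r x hx y hy z hz
    rw [flp_apply f (epar_sb hx.2 hy.2) hz.2, flp_apply f hy.2 hz.2, flp_apply f hx.2 hz.2,
      hf.eq2 _ _ _ z hz x hx y hy]
    simp only [map_smul, LinearMap.smul_apply, smul_add, smul_smul]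
    rw [add_comm]
    congr 2
    · rw [← sgn_add, ← sgn_add]; congr 1; rcases z2 p with rfl | rfl <;> rcases z2 q with rfl | rfl <;> rcases z2 r with rfl | rfl <;>
        rcases z2 pf with rfl | rfl <;> rfl
    · rw [← sgn_add]; congr 1; rcases z2 p with rfl | rfl <;> rcases z2 q with rfl | rfl <;> rcases z2 r with rfl | rfl <;>
        rcases z2 pf with rfl | rfl <;> rfl
  · intro p q r x hx y hy z hz
    rw [flp_apply f hx.2 (epar_sb hy.2 hz.2), flp_apply f hx.2 hy.2, flp_apply f hx.2 hz.2,
      hf.eq1 _ _ _ y hy z hz x hx]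
    simp only [map_smul, LinearMap.smul_apply, smul_add, smul_smul]
    rw [add_comm]
    congr 2
    · rw [← sgn_add]; congr 1; rcases z2 p with rfl | rfl <;> rcases z2 q with rfl | rfl <;> rcases z2 r with rfl | rfl <;>
        rcases z2 pf with rfl | rfl <;> rfl
    · rw [← sgn_add, ← sgn_add]; congr 1; rcases z2 p with rfl | rfl <;> rcases z2 q with rfl | rfl <;> rcases z2 r with rfl | rfl <;>
        rcases z2 pf with rfl | rfl <;> rfl

lemma sub_bider (G : Good L A) (hf : IsSuperBider n L pf f) {κ : ℂ} (hκ : pf = 0 ∨ κ = 0) :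
    IsSuperBider n L pf (f + (-κ) • sbL n) := by
  rcases hκ with rfl | rfl
  · refine ⟨?_, ?_, ?_⟩
    · intro α β x hx y hy
      refine Submodule.add_mem _ (hf.maps _ _ _ hx _ hy) (Submodule.smul_mem _ _ ⟨G.br _ hx.1 _ hy.1, ?_⟩)
      simpa using epar_sb hx.2 hy.2
    · intro p q r x hx y hy z hz
      simp only [LinearMap.add_apply, LinearMap.smul_apply, map_add, hf.eq1 _ _ _ x hx y hy z hz, jacobi hx.2 hy.2 hz.2, map_sub, map_smul]
      rw [sb_skew hy.2 (epar_sb hx.2 hz.2)]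
      rcases z2 p with rfl | rfl <;> rcases z2 q with rfl | rfl <;> rcases z2 r with rfl | rfl <;>
        simp [z2_11] <;> module
    · intro p q r x hx y hy z hz
      simp only [LinearMap.add_apply, LinearMap.smul_apply, map_add, hf.eq2 _ _ _ x hx y hy z hz, jacobi hx.2 hy.2 hz.2, map_sub, map_smul]
      simp only [zero_add]
      module
  · simpa using hf

/-- core theorem -/
theorem core (G : Good L A) (H2 : OffSep L A) (E0 : Set (E n))
    (hE0 : ∀ e ∈ E0, ∃ α p, Hom L A α p e)
    (H4 : ∀ (pf : ZMod 2) (f : E n →ₗ[ℂ] E n →ₗ[ℂ] E n), IsSuperBider n L pf f → WtZero L A f →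
      ∃ κ : ℂ, (pf = 0 ∨ κ = 0) ∧ ∀ e ∈ E0, Gd L A f κ e)
    (H5 : ∀ z ∈ L, (∀ e ∈ E0, ∀ e' ∈ E0, sbL n (sbL n e e') z = 0) → z = 0)
    (H6 : ∃ e ∈ E0, ∃ e' ∈ E0, sbL n e e' ≠ 0)
    (hf : IsSuperBider n L pf f) : ∃ κ : ℂ, ∀ x ∈ L, ∀ y ∈ L, f x y = κ • sbL n x y := by
  obtain ⟨κ, hκ, h1⟩ := H4 pf f hf (wtZero G H2 hf)
  obtain ⟨κ', hκ', h2⟩ := H4 pf _ (flp_bider G hf) (wtZero G H2 (flp_bider G hf))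
  have h2' : ∀ e ∈ E0, ∀ α p x, Hom L A α p x → f e x = (-κ') • sbL n e x := by
    intro e he α p x hx
    obtain ⟨β, q, heh⟩ := hE0 e he
    have := h2 e he α p x hx
    rw [flp_apply f hx.par heh.par, sb_skew hx.par heh.par] at this
    have h3 : sgn (p * q) • f e x = sgn (p * q) • ((-κ') • sbL n e x) := by rw [this]; module
    exact smul_right_injective _ (sgn_ne _) h3
  have hkk : -κ' = κ := by
    obtain ⟨e, he, e', he', hne⟩ := H6
    obtain ⟨β, q, heh⟩ := hE0 e he
    obtain ⟨β', q', heh'⟩ := hE0 e' he'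
    have := (h2' e he _ _ _ heh').symm.trans (h1 e' he' _ _ _ heh)
    exact smul_left_injective _ hne this
  rw [hkk] at h2'
  have hg := sub_bider G hf hκ
  set g := f + (-κ) • sbL n with hgd
  have g1 : ∀ e ∈ E0, ∀ α p x, Hom L A α p x → g x e = 0 := by
    intro e he α p x hx
    simp [hgd, h1 e he _ _ _ hx]
  have g2 : ∀ e ∈ E0, ∀ α p x, Hom L A α p x → g e x = 0 := by
    intro e he α p x hx
    simp [hgd, h2' e he _ _ _ hx]
  have g0 : ∀ α p x β q y, Hom L A α p x → Hom L A β q y → g x y = 0 := by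
    intro α p x β q y hx hy
    have gm := hg.maps _ _ _ hx.i _ hy.i
    apply H5 _ gm.1
    intro e he e' he'
    obtain ⟨γ, r, heh⟩ := hE0 e he
    obtain ⟨γ', r', heh'⟩ := hE0 e' he'
    rw [jacobi heh.par heh'.par gm.2]
    have k1 := hg.eq1 _ _ _ e heh.i x hx.i (sbL n e' y) (heh'.sb G hy).i
    have k2 := hg.eq2 _ _ _ (sbL n e x) (heh.sb G hx).i e' heh'.i y hy.i
    rw [hg.eq2 _ _ _ x hx.i e' heh'.i y hy.i, g1 e' he' _ _ _ hx, g2 e he _ _ _ (heh'.sb G hy)] at k1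
    rw [hg.eq1 _ _ _ e heh.i x hx.i y hy.i, g1 e' he' _ _ _ (heh.sb G hx), g2 e he _ _ _ hy] at k2
    rw [k1] at k2
    simp only [map_zero, LinearMap.zero_apply, zero_add, add_zero, smul_zero, map_smul] at k2
    rw [smul_smul, smul_smul] at k2
    have hs : sgn ((pf + (r + p)) * r') * sgn (r * pf) =
        (sgn (r * pf) * sgn ((pf + p) * r')) * sgn (r * r') := by
      simp only [← sgn_add]; congr 1; ring
    rw [hs, mul_smul _ (sgn (r * r'))] at k2
    rw [sub_eq_zero]
    exact smul_right_injective _ (mul_ne_zero (sgn_ne _) (sgn_ne _)) k2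
  refine ⟨κ, ?_⟩
  have g3 : ∀ x ∈ L, ∀ y ∈ L, g x y = 0 := by
    intro x hx y hy
    refine hom_span G hx (LinearMap.ker (g.flip y)) fun α p x hx => ?_
    rw [LinearMap.mem_ker, LinearMap.flip_apply]
    exact hom_span G hy (LinearMap.ker (g x)) fun β q y hy => g0 _ _ _ _ _ _ hx hy
  intro x hx y hy
  have := g3 x hx y hy
  simpa [hgd, ← sub_eq_add_neg, sub_eq_zero] using this

end

section
variable {n : ℕ}

lemma Eneg_mul (a b : E n) : -a * b = -(a * b) := neg_mul a b
lemma Emul_neg (a b : E n) : a * -b = -(a * b) := mul_neg a b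
lemma Esub_mul (a b c : E n) : (a - b) * c = a * c - b * c := sub_mul a b c
lemma Emul_sub (a b c : E n) : a * (b - c) = a * b - a * c := mul_sub a b c
lemma Eone_smul (a : E n) : (-1 : ℂ) • a = -a := neg_one_smul ℂ a

lemma ring_anti {R : Type*} [Ring R] {p q x c d : R} (hp : p * x + x * p = c) (hq : q * x + x * q = d)
    (hd : p * d = d * p) (hc : q * c = c * q) : (p * q + q * p) * x = x * (p * q + q * p) := by
  have h1 : p * x = c - x * p := eq_sub_of_add_eq hp
  have h2 : q * x = d - x * q := eq_sub_of_add_eq hq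
  calc (p * q + q * p) * x = p * (q * x) + q * (p * x) := by noncomm_ring
    _ = p * (d - x * q) + q * (c - x * p) := by rw [h1, h2]
    _ = p * d - (p * x) * q + q * c - (q * x) * p := by noncomm_ring
    _ = _ := by rw [h1, h2, hd, hc]; noncomm_ring

/-- number of elements of S below i -/
def lt (i : Fin n) (S : Finset (Fin n)) : ℕ := (S.filter (· < i)).card

lemma lt_eq_inv (i : Fin n) (S : Finset (Fin n)) : inversions n {i} S = lt i S := by
  unfold inversions lt
  rw [Finset.singleton_product, Finset.filter_map, Finset.card_map]
  rfl

lemma lt_insert (i j : Fin n) (S : Finset (Fin n)) (h : j ∉ S) :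
    lt i (insert j S) = lt i S + if j < i then 1 else 0 := by
  unfold lt
  rw [Finset.filter_insert]
  split_ifs
  · rw [Finset.card_insert_of_notMem (by simp [h])]
  · simp

lemma lt_erase_self (i : Fin n) (S : Finset (Fin n)) : lt i (S.erase i) = lt i S := by
  unfold lt; congr 1; ext x; simp; intro h _ h'; subst h'; exact absurd h (lt_irrefl _)

lemma inv_union_left (S T U : Finset (Fin n)) (h : Disjoint S T) :
    inversions n (S ∪ T) U = inversions n S U + inversions n T U := by
  unfold inversions
  rw [Finset.union_product, Finset.filter_union, Finset.card_union_of_disjoint]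
  apply Finset.disjoint_filter_filter
  rw [Finset.disjoint_left] at *
  rintro ⟨a, b⟩ h1 h2
  simp at h1 h2; exact h h1.1 h2.1

lemma inv_union_right (S T U : Finset (Fin n)) (h : Disjoint T U) :
    inversions n S (T ∪ U) = inversions n S T + inversions n S U := by
  unfold inversions
  rw [Finset.product_union, Finset.filter_union, Finset.card_union_of_disjoint]
  apply Finset.disjoint_filter_filter
  rw [Finset.disjoint_left] at *
  rintro ⟨a, b⟩ h1 h2
  simp at h1 h2; exact h h1.2 h2.2

lemma inv_swap (S T : Finset (Fin n)) (h : Disjoint S T) :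
    inversions n S T + inversions n T S = S.card * T.card := by
  unfold inversions
  have : ((T ×ˢ S).filter fun p => p.2 < p.1).card = ((S ×ˢ T).filter fun p => ¬ p.2 < p.1).card := by
    apply Finset.card_bij (fun p _ => (p.2, p.1))
    · rintro ⟨a, b⟩ hp
      simp at hp ⊢
      exact ⟨⟨hp.1.2, hp.1.1⟩, hp.2.le⟩
    · rintro ⟨a, b⟩ _ ⟨c, d⟩ _ h
      simp at h; simp [h]
    · rintro ⟨a, b⟩ hp
      simp at hp
      refine ⟨(b, a), ?_, rfl⟩
      simp [hp.1]
      refine lt_of_le_of_ne hp.2 ?_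
      rintro rfl
      exact Finset.disjoint_left.1 h hp.1.1 hp.1.2
  rw [this, Finset.card_filter_add_card_filter_not, Finset.card_product]

lemma mul_mono (S T : Finset (Fin n)) : mulOp n (mono n S) (mono n T) =
    if Disjoint S T then msign (inversions n S T) • mono n (S ∪ T) else 0 := by
  funext U
  show (∑ R ∈ U.powerset, msign (inversions n R (U \ R)) * mono n S R * mono n T (U \ R)) = _
  by_cases hU : S ⊆ U
  · rw [Finset.sum_eq_single_of_mem S (Finset.mem_powerset.2 hU)]
    · by_cases hT : U \ S = T
      · subst hT
        rw [if_pos Finset.disjoint_sdiff]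
        simp [Finset.union_eq_right.2 hU]
      · rw [mono_ne hT]
        split_ifs with hd
        · rw [Pi.smul_apply, mono_ne (S := S ∪ T)]; · simp
          rintro rfl; apply hT
          rw [Finset.union_sdiff_left, Finset.sdiff_eq_self_of_disjoint hd.symm]
        · simp
    · intro R _ hR; simp [mono_ne hR]
  · rw [Finset.sum_eq_zero]
    · split_ifs with hd
      · rw [Pi.smul_apply, mono_ne]; · simp
        rintro rfl; exact hU Finset.subset_union_left
      · simp
    · intro R hR
      rw [mono_ne]; · simp
      rintro rfl; exact hU (Finset.mem_powerset.1 hR)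

/-- multiplication by a generator -/
def X (i : Fin n) : E n := mulOp n (mono n {i})
def P (i : Fin n) : E n := pd n i

lemma X_mono (i : Fin n) (S : Finset (Fin n)) : X i (mono n S) =
    if i ∈ S then 0 else msign (lt i S) • mono n (insert i S) := by
  unfold X
  rw [mul_mono, lt_eq_inv]
  by_cases h : i ∈ S <;> simp [h]

lemma P_mono (i : Fin n) (S : Finset (Fin n)) : P i (mono n S) =
    if i ∈ S then msign (lt i S) • mono n (S.erase i) else 0 := by
  funext U
  show (if i ∈ U then 0 else msign (lt i U) * mono n S (insert i U)) = _
  by_cases hU : i ∈ U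
  · rw [if_pos hU]
    split_ifs
    · rw [Pi.smul_apply, mono_ne]; · simp
      rintro rfl; simp at hU
    · rfl
  · rw [if_neg hU]
    by_cases h : insert i U = S
    · subst h
      simp [hU, lt_insert]
    · rw [mono_ne h]
      split_ifs with hS
      · rw [Pi.smul_apply, mono_ne]; · simp
        rintro rfl; exact h (Finset.insert_erase hS)
      · simp

lemma one_mul_op : mulOp n (mono n ∅) = 1 := by
  apply E_ext1; intro S; rw [mul_mono]; simp [inversions]

lemma mul_op_one (f : Lambda n) : mulOp n f (mono n ∅) = f := by
  have : (mulOp n).flip (mono n ∅) = LinearMap.id := by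
    apply E_ext1; intro S; simp [mul_mono, inversions]
  exact congrArg (fun D : E n => D f) this

lemma mul_assoc_mono (S T U : Finset (Fin n)) :
    mulOp n (mulOp n (mono n S) (mono n T)) (mono n U) = mulOp n (mono n S) (mulOp n (mono n T) (mono n U)) := by
  simp only [mul_mono]
  by_cases h1 : Disjoint S T <;> by_cases h2 : Disjoint T U <;> simp only [h1, h2, if_true, if_false, map_smul, map_zero, LinearMap.smul_apply, LinearMap.zero_apply, mul_mono, Finset.disjoint_union_left, Finset.disjoint_union_right, true_and, and_true, false_and, and_false, smul_zero]
  by_cases h3 : Disjoint S U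
  · simp only [h3, if_true, smul_smul, inv_union_left _ _ _ h1, inv_union_right _ _ _ h2, msign_add, Finset.union_assoc]
    congr 1; ring
  · simp [h3]

lemma mulOp_assoc (f g : Lambda n) : mulOp n (mulOp n f g) = mulOp n f * mulOp n g := by
  have h3 : ∀ S T, mulOp n (mulOp n (mono n S) (mono n T)) = mulOp n (mono n S) * mulOp n (mono n T) := by
    intro S T; apply E_ext1; intro U
    exact mul_assoc_mono S T U
  have h2 : ∀ S, mulOp n ∘ₗ mulOp n (mono n S) = (LinearMap.mulLeft ℂ (mulOp n (mono n S))) ∘ₗ mulOp n := by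
    intro S; apply E_ext1; intro T; simp [h3]
  have h1 : mulOp n ∘ₗ (mulOp n).flip g = (LinearMap.mulRight ℂ (mulOp n g)) ∘ₗ mulOp n := by
    apply E_ext1; intro S
    have := congrArg (fun D => D g) (h2 S)
    simpa using this
  have := congrArg (fun D => D f) h1
  simpa using this

lemma lam_ind (V : Submodule ℂ (Lambda n)) (h1 : mono n ∅ ∈ V) (hX : ∀ j, ∀ f ∈ V, X j f ∈ V) (f : Lambda n) : f ∈ V := by
  apply lam_span; intro S
  induction S using Finset.induction_on with
  | empty => exact h1
  | insert a S ha ih =>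
    have := hX a _ ih
    rw [X_mono, if_neg ha] at this
    exact (V.smul_mem_iff (msign_ne _)).1 this

lemma P_one (i : Fin n) : P i (mono n ∅) = 0 := by simp [P_mono]

lemma X_one (i : Fin n) : X i (mono n ∅) = mono n {i} := by simp [X_mono, lt]

lemma PX_same (i : Fin n) : P i * X i = 1 - X i * P i := by
  rw [eq_sub_iff_add_eq]
  apply E_ext1; intro S
  simp only [LinearMap.add_apply, Module.End.mul_apply, X_mono, P_mono, Module.End.one_apply]
  by_cases h : i ∈ S
  · simp [h, X_mono, lt_erase_self, smul_smul, msign_mul_self]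
  · simp [h, P_mono, lt_insert, smul_smul, msign_mul_self]

lemma PX_diff {i j : Fin n} (hij : i ≠ j) : P i * X j = - (X j * P i) := by
  rw [eq_neg_iff_add_eq_zero]
  apply E_ext1; intro S
  simp only [LinearMap.add_apply, Module.End.mul_apply, X_mono, P_mono, LinearMap.zero_apply]
  by_cases hj : j ∈ S <;> by_cases hi : i ∈ S
  · simp [hi, hj, X_mono, hij.symm]
  · simp [hi, hj]
  · have e : insert j (S.erase i) = (insert j S).erase i := by
      rw [Finset.erase_insert_of_ne hij.symm]
    simp only [hi, hj, if_true, if_false, map_smul, P_mono, X_mono, Finset.mem_insert, Finset.mem_erase, hij, hij.symm, or_true, and_false, e, smul_smul, lt_insert _ _ _ hj]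
    rw [← add_smul]
    have h2 : lt j S = lt j (S.erase i) + if i < j then 1 else 0 := by
      rw [← lt_insert _ _ _ (Finset.notMem_erase i S), Finset.insert_erase hi]
    rw [h2, msign_add, msign_add]
    convert zero_smul ℂ _
    rcases lt_or_gt_of_ne hij with h | h
    · simp [h, h.not_gt]; ring
    · simp [h, h.not_gt]; ring
  · simp [hi, hj, P_mono, hij]

lemma X_anti (i j : Fin n) : X i * X j = - (X j * X i) := by
  rw [eq_neg_iff_add_eq_zero]
  apply E_ext1; intro S
  simp only [LinearMap.add_apply, Module.End.mul_apply, X_mono, LinearMap.zero_apply]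
  by_cases hij : i = j
  · subst hij
    by_cases h : i ∈ S <;> simp [h, X_mono]
  by_cases hj : j ∈ S <;> by_cases hi : i ∈ S
  · simp [hi, hj]
  · simp [hi, hj, X_mono]
  · simp [hi, hj, X_mono]
  · simp only [hi, hj, if_false, map_smul, X_mono, Finset.mem_insert, hij, Ne.symm hij, or_self, smul_smul, lt_insert _ _ _ hj, lt_insert _ _ _ hi, Finset.insert_comm i j]
    rw [← add_smul, msign_add, msign_add]
    convert zero_smul ℂ _
    rcases lt_or_gt_of_ne hij with h | h
    · simp [h, h.not_gt]; ring
    · simp [h, h.not_gt]; ring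

lemma X_sq (i : Fin n) : X i * X i = 0 := by
  apply E_ext1; intro S
  by_cases h : i ∈ S <;> simp [X_mono, h]

lemma P_anti (i j : Fin n) : P i * P j = - (P j * P i) := by
  rw [eq_neg_iff_add_eq_zero]
  apply E_ext1; intro S
  suffices h : ((P i * P j + P j * P i : E n)) (mono n S) ∈ (⊥ : Submodule ℂ (Lambda n)) by simpa using h
  refine lam_ind ((⊥ : Submodule ℂ (Lambda n)).comap (P i * P j + P j * P i : E n)) ?_ ?_ (mono n S)
  · simp [P_one]
  · intro k f hf
    have hf' : (P i * P j + P j * P i : E n) f = 0 := by simpa using hf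
    have e : ∀ i, ∃ c : E n, P i * X k + X k * P i = c ∧ ∀ D : E n, D * c = c * D := by
      intro i
      by_cases hi : i = k
      · subst hi; exact ⟨1, by rw [PX_same]; abel, by simp⟩
      · exact ⟨0, by rw [PX_diff hi]; abel, by simp⟩
    obtain ⟨c, hc, hc'⟩ := e i
    obtain ⟨d, hd, hd'⟩ := e j
    have : (P i * P j + P j * P i) * X k = X k * (P i * P j + P j * P i) :=
      ring_anti hc hd (hd' _) (hc' _)
    rw [Submodule.mem_comap]
    rw [← Module.End.mul_apply, this, Module.End.mul_apply, hf']; simp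

lemma P_sq (i : Fin n) : P i * P i = 0 := by
  have := P_anti i i
  rw [eq_neg_iff_add_eq_zero, ← two_smul ℂ] at this
  simpa using this

lemma cj_mulOp (f : Lambda n) : cj (mulOp n f) = mulOp n (par n f) := by
  have : cj ∘ₗ mulOp n = mulOp n ∘ₗ par n := by
    apply E_ext1; intro S
    apply E_ext1; intro T
    simp only [LinearMap.comp_apply, cj_def, Module.End.mul_apply, par_mono, map_smul, LinearMap.smul_apply, mul_mono]
    split_ifs with h
    · rw [map_smul, par_mono, Finset.card_union_of_disjoint h, msign_add]
      simp only [smul_smul]; congr 1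
      linear_combination (msign (inversions n S T) * msign S.card) * msign_mul_self T.card
    · simp
  exact congrArg (fun D => D f) this

lemma X_odd (i : Fin n) : X i ∈ epar n 1 := by
  rw [epar_iff, X, cj_mulOp, par_mono]; simp [Eone_smul]

lemma mulOp_epar {p : ZMod 2} {f : Lambda n} (h : f ∈ lpar n p) : mulOp n f ∈ epar n p := by
  rw [epar_iff, cj_mulOp, (lpar_iff _ _).1 h, map_smul]

lemma P_odd (i : Fin n) : P i ∈ epar n 1 := by
  rw [epar_iff]
  apply E_ext1; intro S
  simp only [cj_def, Module.End.mul_apply, par_mono, map_smul, P_mono]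
  split_ifs with h
  · rw [map_smul, par_mono, LinearMap.smul_apply, P_mono, if_pos h]
    have : S.card = (S.erase i).card + 1 := by rw [Finset.card_erase_add_one h]
    rw [this, msign_add, smul_smul, smul_smul, smul_smul]; congr 1
    simp only [msign_one, sgn_one]
    linear_combination (-msign (lt i S)) * msign_mul_self (S.erase i).card
  · simp [P_mono, h]

lemma sb_od {x : E n} (hx : x ∈ epar n 1) (y : E n) : sbL n x y = x * y - cj y * x := by
  rw [epar_iff] at hx
  rw [sbL_def, hx]
  simp only [sgn_one, add_mul, sub_mul, mul_smul_comm]; module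

lemma sb_od' {y : E n} (hy : y ∈ epar n 1) (x : E n) : sbL n x y = x * y - y * cj x := by
  rw [epar_iff] at hy
  rw [sbL_def, hy]
  simp only [sgn_one, add_mul, sub_mul, smul_mul_assoc]; module

lemma par_P (i : Fin n) (f : Lambda n) : par n (P i f) = - P i (par n f) := by
  rw [← cj_apply_par, (epar_iff _ _).1 (P_odd i)]; simp
lemma par_X (i : Fin n) (f : Lambda n) : par n (X i f) = - X i (par n f) := by
  rw [← cj_apply_par, (epar_iff _ _).1 (X_odd i)]; simp

/-- Leibniz -/
lemma leib (i : Fin n) (f : Lambda n) : P i * mulOp n f = mulOp n (P i f) + mulOp n (par n f) * P i := by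
  let V : Submodule ℂ (Lambda n) :=
    { carrier := {f | P i * mulOp n f = mulOp n (P i f) + mulOp n (par n f) * P i}
      add_mem' := by intro f g hf hg; simp only [Set.mem_ofPred_eq] at *; simp only [map_add, mul_add, add_mul, hf, hg]; abel
      zero_mem' := by simp
      smul_mem' := by intro c f hf; simp only [Set.mem_ofPred_eq] at *; simp [hf] }
  refine lam_ind V ?_ ?_ f
  · show _ = _
    rw [P_one, par_mono, one_mul_op]; simp [one_mul_op]
  · intro j f hf
    have hf : P i * mulOp n f = mulOp n (P i f) + mulOp n (par n f) * P i := hf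
    show P i * mulOp n (X j f) = mulOp n (P i (X j f)) + mulOp n (par n (X j f)) * P i
    have e1 : ∀ g, mulOp n (X j g) = X j * mulOp n g := fun g => mulOp_assoc _ _
    rw [par_X, map_neg, e1, e1, ← mul_assoc]
    by_cases h : i = j
    · subst h
      have : P i (X i f) = f - X i (P i f) := by
        have := congrArg (fun D : E n => D f) (PX_same i); simpa using this
      rw [this, PX_same, map_sub, e1, Esub_mul, mul_assoc, hf, one_mul, mul_add, Eneg_mul, mul_assoc]; abel
    · have : P i (X j f) = - X j (P i f) := by
        have := congrArg (fun D : E n => D f) (PX_diff h); simpa using this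
      rw [this, PX_diff h, map_neg, e1, Eneg_mul, Eneg_mul, mul_assoc, hf, mul_add, mul_assoc]; abel

lemma sb_P_mul (i : Fin n) (f : Lambda n) : sbL n (P i) (mulOp n f) = mulOp n (P i f) := by
  rw [sb_od (P_odd i), leib, cj_mulOp]; abel

lemma sb_mul_mul (f g : Lambda n) : sbL n (mulOp n f) (mulOp n g) = 0 := by
  have h2 : ∀ S T, sbL n (mulOp n (mono n S)) (mulOp n (mono n T)) = 0 := by
    intro S T
    rw [sb_hom (mulOp_epar (mono_lpar S)) (mulOp_epar (mono_lpar T)), ← mulOp_assoc, ← mulOp_assoc, mul_mono, mul_mono]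
    by_cases h : Disjoint S T
    · rw [if_pos h, if_pos h.symm, Finset.union_comm T S, map_smul, map_smul, smul_smul, sub_eq_zero]
      congr 1
      have h1 := congrArg msign (inv_swap S T h)
      rw [msign_add, msign_sgn (S.card * T.card)] at h1
      push_cast at h1
      rw [← h1]
      linear_combination (-msign (inversions n S T)) * msign_mul_self (inversions n T S)
    · rw [if_neg h, if_neg (fun h' => h h'.symm)]; simp
  have h1 : ∀ S, (sbL n (mulOp n (mono n S))) ∘ₗ mulOp n = 0 := by
    intro S; apply E_ext1; intro T; exact h2 S T
  have h0 : ((sbL n).flip (mulOp n g)) ∘ₗ mulOp n = 0 := by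
    apply E_ext1; intro S; exact congrArg (fun D => D g) (h1 S)
  exact congrArg (fun D => D f) h0

lemma sb_mul_left {p q r : ZMod 2} {x y z : E n} (hx : x ∈ epar n p) (hy : y ∈ epar n q) (hz : z ∈ epar n r) :
    sbL n (x * y) z = x * sbL n y z + sgn (q * r) • (sbL n x z * y) := by
  rw [sb_hom (epar_mul hx hy) hz, sb_hom hy hz, sb_hom hx hz, add_mul, sgn_add]
  simp only [mul_sub, sub_mul, smul_sub, smul_mul_assoc, mul_smul_comm, smul_smul, mul_assoc]
  rw [mul_comm (sgn (p * r))]; abel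

lemma Wn_span (V : Submodule ℂ (E n)) (h : ∀ S i, mulOp n (mono n S) * P i ∈ V) : Wn n ≤ V := by
  rintro _ ⟨F, rfl⟩
  show ∑ i, mulOp n (F i) * P i ∈ V
  refine Submodule.sum_mem _ fun i _ => ?_
  exact lam_span (F i) (V.comap ((LinearMap.mulRight ℂ (P i)) ∘ₗ mulOp n)) fun S => h S i

lemma MP_mem (f : Lambda n) (i : Fin n) : mulOp n f * P i ∈ Wn n := by
  refine ⟨fun j => if j = i then f else 0, ?_⟩
  show ∑ j, mulOp n (if j = i then f else 0) * P j = _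
  rw [Finset.sum_eq_single i]
  · simp
  · intro b _ hb; simp [hb]
  · simp

lemma Wn_char1 {D : E n} (hD : D ∈ Wn n) (f : Lambda n) : sbL n D (mulOp n f) = mulOp n (D f) := by
  have key : ∀ T, ∀ D ∈ Wn n, sbL n D (mulOp n (mono n T)) = mulOp n (D (mono n T)) := by
    intro T
    have : Wn n ≤ LinearMap.ker ((sbL n).flip (mulOp n (mono n T)) - mulOp n ∘ₗ LinearMap.applyₗ (mono n T)) := by
      apply Wn_span; intro S i
      rw [LinearMap.mem_ker]
      simp only [LinearMap.sub_apply, LinearMap.flip_apply, LinearMap.comp_apply, LinearMap.applyₗ_apply_apply]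
      rw [sb_mul_left (mulOp_epar (mono_lpar S)) (P_odd i) (mulOp_epar (mono_lpar T)), sb_mul_mul, sb_P_mul,
        Module.End.mul_apply, mulOp_assoc]
      simp
    intro D hD
    have := this hD
    rw [LinearMap.mem_ker] at this
    simpa [sub_eq_zero] using this
  have : (sbL n D) ∘ₗ mulOp n = mulOp n ∘ₗ D := by
    apply E_ext1; intro T; exact key T D hD
  exact congrArg (fun D => D f) this

lemma P_x (i k : Fin n) : P i (mono n {k}) = if i = k then mono n ∅ else 0 := by
  rw [P_mono]
  by_cases h : i = k
  · subst h; simp [lt, Finset.filter_singleton]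
  · simp [h]

lemma Wmap_x (F : Fin n → Lambda n) (k : Fin n) : Wmap n F (mono n {k}) = F k := by
  show (∑ i, mulOp n (F i) * P i : E n) (mono n {k}) = _
  rw [LinearMap.sum_apply, Finset.sum_eq_single k]
  · simp [P_x, mul_op_one]
  · intro b _ hb; simp [P_x, hb]
  · simp

lemma W_ext {D D' : E n} (h : D ∈ Wn n) (h' : D' ∈ Wn n) (hh : ∀ k, D (mono n {k}) = D' (mono n {k})) : D = D' := by
  obtain ⟨F, rfl⟩ := h
  obtain ⟨F', rfl⟩ := h'
  congr 1; funext k; simpa [Wmap_x] using hh k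

lemma Wn_char2 {D : E n} (h : ∀ f, sbL n D (mulOp n f) = mulOp n (D f)) : D ∈ Wn n := by
  set W := Wmap n (fun k => D (mono n {k})) with hW
  have hWm : W ∈ Wn n := ⟨_, rfl⟩
  suffices D - W = 0 by rw [sub_eq_zero.1 this]; exact hWm
  have hx : ∀ k, (D - W) (mono n {k}) = 0 := by
    intro k; simp [hW, Wmap_x]
  have hc : ∀ f, sbL n (D - W) (mulOp n f) = mulOp n ((D - W) f) := by
    intro f; simp [h, Wn_char1 hWm]
  generalize D - W = D' at hx hc
  have e1 : ∀ j, D' * X j = X j * cj D' := by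
    intro j
    have := hc (mono n {j})
    rw [hx, map_zero] at this
    have h2 := sb_od' (X_odd j) D'
    rw [← sub_eq_zero, ← h2]; exact this
  have e2 : ∀ j, cj D' * X j = X j * D' := by
    intro j
    have := congrArg cj (e1 j)
    rw [cj_mul, cj_mul, cj_cj, (epar_iff _ _).1 (X_odd j)] at this
    simpa using this
  have h1 : D' (mono n ∅) = 0 := by
    have := hc (mono n ∅)
    rw [one_mul_op, sb_ev' (by rw [epar_iff]; simp [cj_def, par_sq])] at this
    simp only [mul_one, one_mul, sub_self] at this
    have := congrArg (fun D : E n => D (mono n ∅)) this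
    simpa [mul_op_one] using this.symm
  apply LinearMap.ext; intro f
  have := lam_ind (LinearMap.ker D' ⊓ LinearMap.ker (cj D')) ?_ ?_ f
  · exact this.1
  · refine ⟨h1, ?_⟩
    show cj D' _ = 0
    have : cj D' (mono n ∅) = par n (D' (par n (mono n ∅))) := by simp [cj_def]
    rw [this, par_mono]; simp [h1]
  · rintro j f ⟨hf1, hf2⟩
    replace hf1 : D' f = 0 := hf1
    replace hf2 : cj D' f = 0 := hf2
    refine ⟨?_, ?_⟩
    · show (D' * X j) f = 0
      rw [e1]; simp [hf2]
    · show (cj D' * X j) f = 0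
      rw [e2]; simp [hf1]

lemma cj_MP (S : Finset (Fin n)) (i : Fin n) : mulOp n (mono n S) * P i ∈ epar n (S.card + 1) :=
  epar_mul (mulOp_epar (mono_lpar S)) (P_odd i)

lemma Wn_cj {D : E n} (h : D ∈ Wn n) : cj D ∈ Wn n := by
  refine Wn_span ((Wn n).comap cj) ?_ h
  intro S i
  rw [Submodule.mem_comap, (epar_iff _ _).1 (cj_MP S i)]
  exact Submodule.smul_mem _ _ (MP_mem _ _)

lemma Wn_evp {D : E n} (h : D ∈ Wn n) : evp D ∈ Wn n :=
  Submodule.smul_mem _ _ (Submodule.add_mem _ h (Wn_cj h))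
lemma Wn_odp {D : E n} (h : D ∈ Wn n) : odp D ∈ Wn n :=
  Submodule.smul_mem _ _ (Submodule.sub_mem _ h (Wn_cj h))

/-- bracket closed, given homogeneous closure -/
lemma closed_of_hom (L : Submodule ℂ (E n)) (hcj : ∀ x ∈ L, cj x ∈ L)
    (h : ∀ p q x y, x ∈ L → y ∈ L → x ∈ epar n p → y ∈ epar n q → sbL n x y ∈ L) :
    ∀ x ∈ L, ∀ y ∈ L, sbL n x y ∈ L := by
  intro x hx y hy
  have he : ∀ z ∈ L, evp z ∈ L := fun z hz => L.smul_mem _ (L.add_mem hz (hcj z hz))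
  have ho : ∀ z ∈ L, odp z ∈ L := fun z hz => L.smul_mem _ (L.sub_mem hz (hcj z hz))
  rw [← ev_add_od x, ← ev_add_od y]
  simp only [map_add, LinearMap.add_apply]
  exact L.add_mem
    (L.add_mem (h _ _ _ _ (he x hx) (he y hy) (evp_mem x) (evp_mem y)) (h _ _ _ _ (ho x hx) (he y hy) (odp_mem x) (evp_mem y)))
    (L.add_mem (h _ _ _ _ (he x hx) (ho y hy) (evp_mem x) (odp_mem y)) (h _ _ _ _ (ho x hx) (ho y hy) (odp_mem x) (odp_mem y)))

lemma Wn_br : ∀ x ∈ Wn n, ∀ y ∈ Wn n, sbL n x y ∈ Wn n := by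
  apply closed_of_hom _ (fun x hx => Wn_cj hx)
  intro p q x y hx hy hp hq
  apply Wn_char2; intro f
  rw [jacobi' hp hq, Wn_char1 hy, Wn_char1 hx, Wn_char1 hx, Wn_char1 hy, sb_hom hp hq]
  simp

variable {A : Submodule ℂ (Fin n → ℂ)}

lemma MP_wt (S : Finset (Fin n)) (i : Fin n) : IsWt A (wtS A S - wtS A {i}) (mulOp n (mono n S) * P i) := by
  rw [isWt_iff]; intro T U h
  rw [Module.End.mul_apply, P_mono] at h
  split_ifs at h with hi
  · rw [map_smul, mul_mono] at h
    split_ifs at h with hd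
    · have : U = S ∪ T.erase i := by
        by_contra hc; simp [mono_ne hc] at h
      subst this
      ext a
      simp only [wtS_apply, LinearMap.add_apply, LinearMap.sub_apply, Finset.sum_union hd, Finset.sum_singleton]
      rw [← Finset.add_sum_erase _ _ hi]; ring
    · simp at h
  · simp at h

lemma Wn_pr (μ : Module.Dual ℂ A) : ∀ x ∈ Wn n, pr μ x ∈ Wn n := by
  intro x hx
  refine Wn_span ((Wn n).comap (pr μ)) ?_ hx
  intro S i
  rw [Submodule.mem_comap]
  by_cases h : μ = wtS A S - wtS A {i}
  · rw [h, pr_same (MP_wt S i)]; exact MP_mem _ _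
  · rw [pr_other (MP_wt S i) h]; exact Submodule.zero_mem _

lemma XP_mono (i : Fin n) (S : Finset (Fin n)) : (X i * P i) (mono n S) = if i ∈ S then mono n S else 0 := by
  rw [Module.End.mul_apply, P_mono]
  split_ifs with h
  · rw [map_smul, X_mono]; simp [lt_erase_self, smul_smul, msign_mul_self, Finset.insert_erase h]
  · simp

lemma hd_eq (a : Fin n → ℂ) : hd a = ∑ i, a i • (X i * P i) := by
  apply E_ext1; intro S
  rw [hd_mono, LinearMap.sum_apply]
  simp only [LinearMap.smul_apply, XP_mono, smul_ite, smul_zero]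
  rw [← Finset.sum_filter, Finset.sum_smul]; congr 1; ext; simp

lemma hd_W (a : Fin n → ℂ) : hd a ∈ Wn n := by
  rw [hd_eq]; exact Submodule.sum_mem _ fun i _ => Submodule.smul_mem _ _ (MP_mem _ _)

end

section
variable {n : ℕ}

lemma P_univ (i : Fin n) (f : Lambda n) : P i f Finset.univ = 0 := by
  show (if i ∈ Finset.univ then (0:ℂ) else _) = 0
  simp

lemma mul_empty (g f : Lambda n) : mulOp n g f ∅ = g ∅ * f ∅ := by
  show (∑ R ∈ (∅ : Finset (Fin n)).powerset, msign (inversions n R (∅ \ R)) * g R * f (∅ \ R)) = _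
  simp [inversions]

lemma by_parts (i : Fin n) (g f : Lambda n) :
    mulOp n g (P i f) Finset.univ = mulOp n (par n (P i g)) f Finset.univ := by
  have h := congrArg (fun D : E n => D f Finset.univ) (leib i (par n g))
  simp only [LinearMap.add_apply, Module.End.mul_apply, Pi.add_apply, P_univ, par_par] at h
  rw [par_P]
  simp only [map_neg, LinearMap.neg_apply, Pi.neg_apply]
  linear_combination -h

lemma nondeg (g : Lambda n) (h : ∀ f, mulOp n g f Finset.univ = 0) : g = 0 := by
  funext S
  have := h (mono n Sᶜ)
  change (∑ R ∈ (Finset.univ : Finset (Fin n)).powerset,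
    msign (inversions n R (Finset.univ \ R)) * g R * mono n Sᶜ (Finset.univ \ R)) = 0 at this
  rw [Finset.sum_eq_single_of_mem S (by simp)] at this
  · simpa [← Finset.compl_eq_univ_sdiff, msign_ne] using this
  · intro R _ hR
    rw [mono_ne]; · simp
    rw [← Finset.compl_eq_univ_sdiff]; simpa using hR

lemma Wmap_apply (F : Fin n → Lambda n) (f : Lambda n) : Wmap n F f = ∑ i, mulOp n (F i) (P i f) := by
  show (∑ i, mulOp n (F i) * P i : E n) f = _
  rw [LinearMap.sum_apply]; rfl

lemma Wmap_top (F : Fin n → Lambda n) (f : Lambda n) :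
    Wmap n F f Finset.univ = mulOp n (par n (divMap n F)) f Finset.univ := by
  rw [Wmap_apply, Finset.sum_apply]
  simp only [by_parts]
  have : divMap n F = ∑ i, P i (F i) := rfl
  rw [this, map_sum, map_sum, LinearMap.sum_apply, Finset.sum_apply]

lemma divFree_iff (F : Fin n → Lambda n) : F ∈ divFree n ↔ ∀ f, Wmap n F f Finset.univ = 0 := by
  constructor
  · intro h f
    rw [Wmap_top, (LinearMap.mem_ker.1 h)]; simp
  · intro h
    have := nondeg (par n (divMap n F)) (fun f => by rw [← Wmap_top, h])
    refine LinearMap.mem_ker.2 ?_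
    rw [← par_par (divMap n F), this, map_zero]

lemma Sn_iff (D : E n) : D ∈ Sn n ↔ D ∈ Wn n ∧ ∀ f, D f Finset.univ = 0 := by
  constructor
  · rintro ⟨F, hF, rfl⟩
    exact ⟨⟨F, rfl⟩, (divFree_iff F).1 hF⟩
  · rintro ⟨⟨F, rfl⟩, h⟩
    exact ⟨F, (divFree_iff F).2 h, rfl⟩

lemma omega_mul (f : Lambda n) : mulOp n (omegaTop n) f = f ∅ • omegaTop n := by
  have : mulOp n (omegaTop n) = (LinearMap.proj ∅ : Lambda n →ₗ[ℂ] ℂ).smulRight (omegaTop n) := by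
    apply E_ext1; intro S
    rw [omegaTop, mul_mono]
    by_cases h : S = ∅
    · subst h; simp [inversions]
    · have hd : ¬ Disjoint Finset.univ S := by
        obtain ⟨x, hx⟩ := Finset.nonempty_iff_ne_empty.2 h
        exact fun hd => (Finset.disjoint_left.1 hd (Finset.mem_univ x)) hx
      simp [hd, mono_ne (Ne.symm h)]
  rw [this]; rfl

lemma oneM_mul (g : Lambda n) : mulOp n (oneM n) g = g - g ∅ • omegaTop n := by
  rw [oneM, map_sub, one_mul_op, LinearMap.sub_apply, omega_mul]; rfl

lemma omega_empty (hn : 0 < n) : omegaTop n ∅ = 0 := by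
  rw [omegaTop, mono_ne]
  intro h
  have : (⟨0, hn⟩ : Fin n) ∈ (∅ : Finset (Fin n)) := h ▸ Finset.mem_univ _
  simp at this

lemma Wmap_shift (G : Fin n → Lambda n) (c : ℂ) (f : Lambda n) :
    Wmap n (fun i => G i + (c * G i ∅) • omegaTop n) f = Wmap n G f + (c * Wmap n G f ∅) • omegaTop n := by
  simp only [Wmap_apply, Finset.sum_apply, map_add, map_smul, LinearMap.add_apply, LinearMap.smul_apply, omega_mul, mul_empty, Finset.sum_add_distrib, Finset.mul_sum, Finset.sum_smul, smul_smul, mul_assoc]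

lemma Stn_iff (hn : 0 < n) (D : E n) : D ∈ Stn n ↔ D ∈ Wn n ∧ ∀ f, D f Finset.univ + D f ∅ = 0 := by
  have key : ∀ G : Fin n → Lambda n, oneMScale n G = fun i => G i + (-1 * G i ∅) • omegaTop n := by
    intro G; funext i
    show mulOp n (oneM n) (G i) = _
    rw [oneM_mul]; module
  have h1 : omegaTop n Finset.univ = 1 := by simp [omegaTop]
  constructor
  · rintro ⟨G, hG, rfl⟩
    refine ⟨⟨_, rfl⟩, fun f => ?_⟩
    rw [LinearMap.comp_apply, key, Wmap_shift]
    have := (divFree_iff G).1 hG f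
    simp [this, h1, omega_empty hn]
  · rintro ⟨⟨F, rfl⟩, h⟩
    refine ⟨fun i => F i + (1 * F i ∅) • omegaTop n, ?_, ?_⟩
    · refine (divFree_iff _).2 fun f => ?_
      rw [Wmap_shift]
      simpa [h1] using h f
    · rw [LinearMap.comp_apply, key]
      congr 1; funext i
      simp only [Pi.add_apply, Pi.smul_apply, omega_empty hn, smul_eq_mul, mul_zero, add_zero]
      module

variable (n) in
/-- the sum-zero torus -/
def A0 : Submodule ℂ (Fin n → ℂ) where
  carrier := {a | ∑ i, a i = 0}
  add_mem' := by intro a b ha hb; simp only [Set.mem_ofPred_eq] at *; simp [Finset.sum_add_distrib, ha, hb]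
  zero_mem' := by simp
  smul_mem' := by intro c a ha; simp only [Set.mem_ofPred_eq] at *; simp [← Finset.mul_sum, ha]

lemma A0_sum (a : A0 n) : ∑ i, (a : Fin n → ℂ) i = 0 := a.2

/-- what we need from W, S, S-tilde -/
structure SType (L : Submodule ℂ (E n)) : Prop where
  le : L ≤ Wn n
  good : Good L (A0 n)
  el : ∀ g j, P j g = 0 → g ∅ = 0 → mulOp n g * P j ∈ L

lemma W_SType : SType (Wn n) where
  le := le_refl _
  good := ⟨Wn_br, fun μ => Wn_pr μ, fun _ h => Wn_cj h, fun a => hd_W _⟩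
  el := fun _ _ _ _ => MP_mem _ _

def Wl (ℓ : Lambda n →ₗ[ℂ] ℂ) : Submodule ℂ (E n) where
  carrier := {D | D ∈ Wn n ∧ ∀ f, ℓ (D f) = 0}
  add_mem' := by rintro a b ⟨ha, ha'⟩ ⟨hb, hb'⟩; exact ⟨Submodule.add_mem _ ha hb, fun f => by simp [ha', hb']⟩
  zero_mem' := ⟨Submodule.zero_mem _, fun f => by simp⟩
  smul_mem' := by rintro c a ⟨ha, ha'⟩; exact ⟨Submodule.smul_mem _ _ ha, fun f => by simp [ha']⟩

lemma Wl_br (ℓ : Lambda n →ₗ[ℂ] ℂ) (c : ℂ) (hc : ∀ f, ℓ (par n f) = c * ℓ f) :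
    (∀ x ∈ Wl ℓ, cj x ∈ Wl ℓ) ∧ ∀ x ∈ Wl ℓ, ∀ y ∈ Wl ℓ, sbL n x y ∈ Wl ℓ := by
  have h1 : ∀ x ∈ Wl ℓ, cj x ∈ Wl ℓ := by
    rintro x ⟨hx, hx'⟩
    refine ⟨Wn_cj hx, fun f => ?_⟩
    simp [cj_def, hc, hx']
  refine ⟨h1, ?_⟩
  apply closed_of_hom _ h1
  rintro p q x y ⟨hx, hx'⟩ ⟨hy, hy'⟩ hp hq
  refine ⟨Wn_br _ hx _ hy, fun f => ?_⟩
  rw [sb_hom hp hq]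
  simp [hx', hy']

lemma MP_top (g : Lambda n) (j : Fin n) (h : P j g = 0) (f : Lambda n) : (mulOp n g * P j) f Finset.univ = 0 := by
  rw [Module.End.mul_apply, by_parts, h]; simp

lemma S_SType : SType (Sn n) := by
  have e : Sn n = Wl (LinearMap.proj Finset.univ) := by ext D; rw [Sn_iff]; rfl
  obtain ⟨h1, h2⟩ := Wl_br (n := n) (LinearMap.proj Finset.univ) (msign (Finset.univ : Finset (Fin n)).card) (fun f => rfl)
  rw [← e] at h1 h2
  refine ⟨fun D h => ((Sn_iff D).1 h).1, ⟨h2, ?_, h1, ?_⟩, ?_⟩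
  · intro μ x hx
    rw [Sn_iff] at hx ⊢
    refine ⟨Wn_pr μ _ hx.1, fun f => ?_⟩
    rw [app_sum]
    apply Finset.sum_eq_zero; intro S _
    rw [pr_entry, hx.2]; simp
  · intro a
    rw [Sn_iff]
    refine ⟨hd_W _, fun f => ?_⟩
    rw [hd_apply, A0_sum, zero_mul]
  · intro g j h _
    rw [Sn_iff]
    exact ⟨MP_mem _ _, MP_top g j h⟩

lemma St_SType (hn : 0 < n) (he : Even n) : SType (Stn n) := by
  let ℓ : Lambda n →ₗ[ℂ] ℂ := (LinearMap.proj (Finset.univ : Finset (Fin n)) : Lambda n →ₗ[ℂ] ℂ) + (LinearMap.proj (∅ : Finset (Fin n)) : Lambda n →ₗ[ℂ] ℂ)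
  have e : Stn n = Wl ℓ := by ext D; rw [Stn_iff hn]; rfl
  obtain ⟨h1, h2⟩ := Wl_br (n := n) ℓ 1 (fun f => by simp [ℓ, msign, he.neg_one_pow])
  rw [← e] at h1 h2
  refine ⟨fun D h => ((Stn_iff hn D).1 h).1, ⟨h2, ?_, h1, ?_⟩, ?_⟩
  · intro μ x hx
    rw [Stn_iff hn] at hx ⊢
    refine ⟨Wn_pr μ _ hx.1, fun f => ?_⟩
    rw [app_sum, app_sum, ← Finset.sum_add_distrib]
    apply Finset.sum_eq_zero; intro S _
    rw [pr_entry, pr_entry]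
    have hw : wtS (A0 n) Finset.univ = wtS (A0 n) ∅ := by
      ext a; simp [A0_sum]
    rw [hw]
    have := hx.2 (mono n S)
    split_ifs
    · rw [← mul_add, this, mul_zero]
    · simp
  · intro a
    rw [Stn_iff hn]
    refine ⟨hd_W _, fun f => ?_⟩
    rw [hd_apply, A0_sum, zero_mul]; simp
  · intro g j h h0
    rw [Stn_iff hn]
    refine ⟨MP_mem _ _, fun f => ?_⟩
    rw [MP_top g j h, Module.End.mul_apply, mul_empty, h0]; simp

end

section
variable {n : ℕ}

lemma avoid (s : Finset (Fin n)) (h : s.card < n) : ∃ k, k ∉ s := by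
  by_contra hc; push Not at hc
  have : s = Finset.univ := Finset.eq_univ_iff_forall.2 hc
  rw [this] at h; simp at h

/-- difference torus element -/
def dl (p q : Fin n) : A0 n := ⟨Pi.single p 1 - Pi.single q 1, by
  show ∑ i, (Pi.single p (1:ℂ) - Pi.single q 1 : Fin n → ℂ) i = 0
  simp [Finset.sum_sub_distrib]⟩

lemma dl_apply (p q i : Fin n) : (dl p q : Fin n → ℂ) i = (if i = p then 1 else 0) - (if i = q then 1 else 0) := by
  simp [dl, Pi.single_apply]

def ee (i j : Fin n) : E n := X i * P j
def TT (i j k : Fin n) : E n := mulOp n (X i (mono n {j})) * P k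

lemma ee_x (i j m : Fin n) : ee i j (mono n {m}) = if j = m then mono n {i} else 0 := by
  rw [ee, Module.End.mul_apply, P_x]; split_ifs <;> simp [X_one]

lemma TT_x (i j k m : Fin n) : TT i j k (mono n {m}) = if k = m then X i (mono n {j}) else 0 := by
  rw [TT, Module.End.mul_apply, P_x]; split_ifs <;> simp [mul_op_one]

lemma XX_mono {i j : Fin n} (h : i ≠ j) : X i (mono n {j}) = msign (lt i {j}) • mono n {i, j} := by
  rw [X_mono, if_neg (by simpa using h)]

lemma P_XX {i j l : Fin n} (h : l ≠ i) (h' : l ≠ j) : P l (X i (mono n {j})) = 0 := by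
  rw [← Module.End.mul_apply, PX_diff h, LinearMap.neg_apply, Module.End.mul_apply, P_x, if_neg h']; simp

lemma ee_even (i j : Fin n) : ee i j ∈ epar n 0 := by
  have := cj_MP {i} j
  simp only [Finset.card_singleton, Nat.cast_one, z2_11] at this
  exact this

lemma TT_eq {i j : Fin n} (h : i ≠ j) (k : Fin n) : TT i j k = msign (lt i {j}) • (mulOp n (mono n {i,j}) * P k) := by
  rw [TT, XX_mono h, map_smul, smul_mul_assoc]

lemma TT_odd {i j : Fin n} (h : i ≠ j) (k : Fin n) : TT i j k ∈ epar n 1 := by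
  have := cj_MP {i,j} k
  rw [Finset.card_pair h] at this
  rw [TT_eq h]
  apply Submodule.smul_mem
  have e : ((2:ℕ):ZMod 2) + 1 = 1 := by decide
  rwa [e] at this

lemma ee_W (i j : Fin n) : ee i j ∈ Wn n := MP_mem _ _
lemma TT_W (i j k : Fin n) : TT i j k ∈ Wn n := MP_mem _ _

/-- weights -/
def we (i j : Fin n) : Module.Dual ℂ (A0 n) := wtS (A0 n) {i} - wtS (A0 n) {j}
def wT (i j k : Fin n) : Module.Dual ℂ (A0 n) := wtS (A0 n) {i,j} - wtS (A0 n) {k}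

lemma we_apply (i j : Fin n) (a : A0 n) : we i j a = (a : Fin n → ℂ) i - (a : Fin n → ℂ) j := by
  simp [we]
lemma wT_apply {i j : Fin n} (h : i ≠ j) (k : Fin n) (a : A0 n) : wT i j k a = (a : Fin n → ℂ) i + (a : Fin n → ℂ) j - (a : Fin n → ℂ) k := by
  simp [wT, Finset.sum_pair h]

variable {L : Submodule ℂ (E n)}

lemma ee_hom (hL : SType L) {i j : Fin n} (h : i ≠ j) : Hom L (A0 n) (we i j) 0 (ee i j) :=
  ⟨hL.el _ _ (by rw [P_x, if_neg (Ne.symm h)]) (mono_ne (by simp)), ee_even i j, MP_wt {i} j⟩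

lemma TT_hom (hL : SType L) {i j k : Fin n} (h : i ≠ j) (hi : k ≠ i) (hj : k ≠ j) : Hom L (A0 n) (wT i j k) 1 (TT i j k) :=
  ⟨hL.el _ _ (P_XX hi hj) (by rw [XX_mono h]; simp [mono_ne (T := ∅) (S := {i,j}) (by symm; simp)]), TT_odd h k, by
    rw [TT_eq h]; exact isWt_smul _ (MP_wt {i,j} k)⟩

lemma ee_ee {i k j : Fin n} (hij : i ≠ j) : sbL n (ee i k) (ee k j) = ee i j := by
  apply W_ext (Wn_br _ (ee_W _ _) _ (ee_W _ _)) (ee_W _ _)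
  intro m
  rw [sb_ev (ee_even _ _), LinearMap.sub_apply, Module.End.mul_apply, Module.End.mul_apply, ee_x, ee_x, ee_x]
  by_cases h1 : j = m <;> by_cases h2 : k = m <;> simp [h1, h2, ee_x, Ne.symm hij]
  · intro h; exact absurd (h.symm.trans h1.symm) hij

lemma TT_ee {i j k l : Fin n} (hi : l ≠ i) (hj : l ≠ j) : sbL n (TT i j k) (ee k l) = TT i j l := by
  apply W_ext (Wn_br _ (TT_W _ _ _) _ (ee_W _ _)) (TT_W _ _ _)
  intro m
  have h0 : ee k l (X i (mono n {j})) = 0 := by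
    rw [ee, Module.End.mul_apply, P_XX hi hj, map_zero]
  rw [sb_ev' (ee_even _ _), LinearMap.sub_apply, Module.End.mul_apply, Module.End.mul_apply, ee_x, TT_x, TT_x]
  have h0' : ee k l (if k = m then X i (mono n {j}) else 0) = 0 := by
    split_ifs
    · exact h0
    · simp
  rw [h0', sub_zero]
  by_cases h1 : l = m <;> simp [h1, TT_x]

/-- centralizer lemma -/
lemma P_zero_entry {j : Fin n} {g : Lambda n} (h : P j g = 0) {S : Finset (Fin n)} (hS : j ∈ S) : g S = 0 := by
  have := congrFun h (S.erase j)
  change (if j ∈ S.erase j then 0 else msign (lt j (S.erase j)) * g (insert j (S.erase j))) = 0 at this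
  simpa [Finset.insert_erase hS, msign_ne] using this

lemma X_empty (m : Fin n) (u : Lambda n) : X m u ∅ = 0 := by
  rw [X, mul_empty, mono_ne (by simp), zero_mul]

lemma eq_smul_x {m : Fin n} {g : Lambda n} (h : ∀ j, j ≠ m → P j g = 0) (h0 : g ∅ = 0) : g = g {m} • mono n {m} := by
  funext S
  by_cases hS : S = {m}
  · subst hS; simp
  · rw [Pi.smul_apply, mono_ne hS, smul_zero]
    by_cases hc : ∃ j ∈ S, j ≠ m
    · obtain ⟨j, hj, hjm⟩ := hc
      exact P_zero_entry (h j hjm) hj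
    · push Not at hc
      rcases Finset.subset_singleton_iff.1 (fun x hx => Finset.mem_singleton.2 (hc x hx)) with h | h
      · rw [h, h0]
      · exact absurd h hS

lemma centralizer (hn : 3 ≤ n) {z : E n} (hz : z ∈ Wn n) (h : ∀ i j, i ≠ j → sbL n (ee i j) z = 0)
    {i j k : Fin n} (hij : i ≠ j) (hT : sbL n (TT i j k) z = 0) : z = 0 := by
  have h1 : ∀ i j, i ≠ j → ∀ f, X i (P j (z f)) = z (ee i j f) := by
    intro i j hij f
    have := h i j hij
    rw [sb_ev (ee_even _ _)] at this
    have := congrArg (fun D : E n => D f) this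
    simpa [sub_eq_zero, ee] using this
  have h2 : ∀ m j, m ≠ j → z (mono n {m}) = X m (P j (z (mono n {j}))) := by
    intro m j hmj
    rw [h1 m j hmj, ee_x, if_pos rfl]
  have h3 : ∀ m, z (mono n {m}) = z (mono n {m}) {m} • mono n {m} := by
    intro m
    obtain ⟨j0, hj0⟩ := avoid {m} (by simp; omega)
    apply eq_smul_x
    · intro j hj
      rw [h2 m j (Ne.symm hj), ← Module.End.mul_apply, PX_diff hj, LinearMap.neg_apply, Module.End.mul_apply,
        ← Module.End.mul_apply (P j) (P j), P_sq]
      simp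
    · rw [h2 m j0 (by simpa [eq_comm] using hj0)]
      exact X_empty _ _
  have h4 : ∀ m j, z (mono n {m}) {m} = z (mono n {j}) {j} := by
    intro m j
    by_cases hmj : m = j
    · rw [hmj]
    · rw [h2 m j hmj, h3 j, map_smul, P_x, if_pos rfl, map_smul, X_one]
      simp
  set b := z (mono n {k}) {k}
  have h5 : z = hd (fun _ => b) := by
    apply W_ext hz (hd_W _)
    intro m
    rw [h3 m, h4 m k, hd_mono]; simp [b]
  have h6 : z ∈ epar n 0 := by rw [h5]; exact hd_even _
  rw [sb_ev' h6] at hT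
  have h7 := congrArg (fun D : E n => D (mono n {k}) {i, j}) hT
  have h8 : z (mono n {k}) = b • mono n {k} := h3 k
  simp only [LinearMap.sub_apply, Module.End.mul_apply, h8, map_smul, TT_x, if_pos rfl, XX_mono hij, if_true] at h7
  rw [h5, hd_mono, Finset.sum_pair hij] at h7
  simp at h7
  have h7' := h7
  have hb : b = 0 := by
    have hm := msign_ne (lt i {j})
    have : msign (lt i {j}) * b = 0 := by linear_combination -h7
    exact (mul_eq_zero.1 this).resolve_left hm
  rw [h5, hb]
  exact map_zero hd

lemma jac0 {p q : ZMod 2} {x y : E n} (hx : x ∈ epar n p) (hy : y ∈ epar n q) {z : E n}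
    (h1 : sbL n x z = 0) (h2 : sbL n y z = 0) : sbL n (sbL n x y) z = 0 := by
  rw [jacobi' hx hy, h1, h2]; simp

lemma four (hn : 4 ≤ n) : ∃ i j k l : Fin n, i ≠ j ∧ i ≠ k ∧ i ≠ l ∧ j ≠ k ∧ j ≠ l ∧ k ≠ l :=
  ⟨⟨0, by omega⟩, ⟨1, by omega⟩, ⟨2, by omega⟩, ⟨3, by omega⟩, by simp, by simp, by simp, by simp, by simp, by simp⟩

lemma S_offsep (hL : SType L) (hn : 4 ≤ n) : OffSep L (A0 n) := by
  intro ν z hz h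
  have h1 : ∀ i j, i ≠ j → sbL n (ee i j) z = 0 := by
    intro i j hij
    obtain ⟨k, hk⟩ := avoid {i, j} (by rw [Finset.card_pair hij]; omega)
    simp only [Finset.mem_insert, Finset.mem_singleton, not_or] at hk
    obtain ⟨hki, hkj⟩ := hk
    by_cases ho : off ν (we i j)
    · exact h _ _ _ (ee_hom hL hij) ho
    have key : ∀ a b : A0 n, (we i j a ≠ 0) → (we i j b = 0) → ∀ α : Module.Dual ℂ (A0 n), α a = 0 → α b ≠ 0 → off ν α := by
      intro a b h1 h2 α h3 h4
      exact (off_or ν a b h1 h3 h2 h4).resolve_left ho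
    have o1 : off ν (we i k) := by
      refine key (dl i j + dl k j) (dl i k + dl j k) ?_ ?_ _ ?_ ?_ <;>
      simp [we_apply, dl_apply, hki, hkj, hij, Ne.symm hki, Ne.symm hkj, Ne.symm hij] <;> norm_num
    have o2 : off ν (we k j) := by
      refine key (dl j i + dl k i) (dl i k + dl j k) ?_ ?_ _ ?_ ?_ <;>
      simp [we_apply, dl_apply, hki, hkj, hij, Ne.symm hki, Ne.symm hkj, Ne.symm hij] <;> norm_num
    rw [← ee_ee (k := k) hij]
    exact jac0 (ee_even _ _) (ee_even _ _) (h _ _ _ (ee_hom hL (Ne.symm hki)) o1) (h _ _ _ (ee_hom hL hkj) o2)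
  obtain ⟨i, j, k, l, hij, hik, hil, hjk, hjl, hkl⟩ := four hn
  refine centralizer (by omega) (hL.le hz) h1 (k := k) hij ?_
  have := off_or (α := wT i j k) (α' := wT i j l) ν (dl i k + dl l k) (dl i l + dl k l)
  simp only [wT_apply hij] at this
  simp [dl_apply, hij, hik, hil, hjk, hjl, hkl, Ne.symm hij, Ne.symm hik, Ne.symm hil, Ne.symm hjk, Ne.symm hjl, Ne.symm hkl] at this
  rcases this (by norm_num) with ho | ho
  · exact h _ _ _ (TT_hom hL hij (Ne.symm hik) (Ne.symm hjk)) ho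
  · rw [← TT_ee (k := l) (Ne.symm hik) (Ne.symm hjk)]
    exact jac0 (TT_odd hij _) (ee_even _ _) (h _ _ _ (TT_hom hL hij (Ne.symm hil) (Ne.symm hjl)) ho) (h1 _ _ (Ne.symm hkl))

/-- weight space of e_ij -/
lemma wt_ee {z : E n} (hz : z ∈ Wn n) {i j : Fin n} (hij : i ≠ j) (h : IsWt (A0 n) (we i j) z) :
    ∃ c : ℂ, z = c • ee i j := by
  rw [isWt_iff] at h
  refine ⟨z (mono n {j}) {i}, W_ext hz (Submodule.smul_mem _ _ (ee_W _ _)) fun m => ?_⟩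
  funext S
  rw [LinearMap.smul_apply, ee_x]
  by_cases hne : z (mono n {m}) S = 0
  · rw [hne]
    by_cases hjm : j = m
    · subst hjm
      by_cases hS : S = {i}
      · subst hS; simp [hne]
      · simp [mono_ne hS]
    · simp [hjm]
  · have h' := h _ _ hne
    have hv : ∀ p q : Fin n, ((if p ∈ S then (1:ℂ) else 0) - if q ∈ S then 1 else 0) = (if m = p then 1 else 0) - (if m = q then 1 else 0)
       + (((if i = p then 1 else 0) - (if i = q then 1 else 0)) - ((if j = p then 1 else 0) - (if j = q then 1 else 0))) := by
      intro p q
      have := LinearMap.congr_fun h' (dl p q)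
      simpa [we_apply, dl_apply, Finset.sum_sub_distrib, eq_comm (a := m), eq_comm (a := i), eq_comm (a := j)] using this
    have h1 := hv i j
    simp only [if_true, hij, Ne.symm hij, if_false] at h1
    have hjm : m = j := by
      by_contra hc
      rw [if_neg hc] at h1
      split_ifs at h1 <;> norm_num at h1
    subst hjm
    rw [if_neg (Ne.symm hij), if_pos rfl] at h1
    have h2 : i ∈ S ∧ m ∉ S := by
      split_ifs at h1 with h3 h4 h4
      · norm_num at h1
      · exact ⟨h3, h4⟩
      · norm_num at h1
      · norm_num at h1
    have hS : S = {i} := by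
      ext q
      rw [Finset.mem_singleton]
      constructor
      · intro hq
        by_contra hqi
        have hqm : m ≠ q := by rintro rfl; exact h2.2 hq
        have := hv i q
        simp [h2.1, hq, hqm, hqi, Ne.symm hij, Ne.symm hqi] at this
      · rintro rfl; exact h2.1
    subst hS
    simp

lemma Gd_smul {A : Submodule ℂ (Fin n → ℂ)} {f : E n →ₗ[ℂ] E n →ₗ[ℂ] E n} {κ : ℂ} {y : E n} (c : ℂ) (h : Gd L A f κ y) : Gd L A f κ (c • y) := by
  intro α p x hx
  rw [map_smul, map_smul, h α p x hx, smul_comm]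

lemma S_H4 (hL : SType L) (hn : 4 ≤ n) (pf : ZMod 2) (f : E n →ₗ[ℂ] E n →ₗ[ℂ] E n) (hf : IsSuperBider n L pf f)
    (hw : WtZero L (A0 n) f) : ∃ κ : ℂ, (pf = 0 ∨ κ = 0) ∧ (∀ i j, i ≠ j → Gd L (A0 n) f κ (ee i j)) ∧
      ∀ i j k, i ≠ j → k ≠ i → k ≠ j → Gd L (A0 n) f κ (TT i j k) := by
  obtain ⟨i0, j0, k0, l0, hij0, hik0, -, hjk0, -, -⟩ := four hn
  have G := hL.good
  obtain ⟨κ, hκ, hg⟩ := gd_init G hf hw (dl i0 j0) (ee_hom hL hij0) (by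
    simp [we_apply, dl_apply, hij0, Ne.symm hij0]) (by
    apply wt_ee (hL.le (hf.maps _ _ _ (Hom.hd G _).i _ (ee_hom hL hij0).i).1) hij0
    have := hw _ _ _ _ _ _ (Hom.hd G (dl i0 j0)) (ee_hom hL hij0)
    simpa using this)
  have sA : ∀ i j k, i ≠ j → k ≠ i → k ≠ j → Gd L (A0 n) f κ (ee i j) → Gd L (A0 n) f κ (ee k j) := by
    intro i j k hij hki hkj h
    rw [← ee_ee (k := i) hkj]
    refine gd_prop G hf hw (dl k j + dl i j) hκ (ee_hom hL hki) (ee_hom hL hij) ?_ ?_ ?_ h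
    · simp [we_apply, dl_apply, hij, hki, hkj, Ne.symm hij, Ne.symm hki, Ne.symm hkj]
    · intro h0
      have := LinearMap.congr_fun h0 (dl k j)
      simp [we_apply, dl_apply, hij, hki, hkj, Ne.symm hij, Ne.symm hki, Ne.symm hkj] at this
    · simp [we_apply, dl_apply, hij, hki, hkj, Ne.symm hij, Ne.symm hki, Ne.symm hkj]; norm_num
  have sB : ∀ i j k, i ≠ j → k ≠ i → k ≠ j → Gd L (A0 n) f κ (ee i j) → Gd L (A0 n) f κ (ee i k) := by
    intro i j k hij hki hkj h
    have e : ee i k = (-1:ℂ) • sbL n (ee j k) (ee i j) := by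
      rw [← ee_ee (k := j) (Ne.symm hki), sb_skew (ee_even _ _) (ee_even _ _)]
      rw [Eone_smul]; simp [sgn_zero]
    rw [e]
    apply Gd_smul
    refine gd_prop G hf hw (dl k i + dl j i) hκ (ee_hom hL (Ne.symm hkj)) (ee_hom hL hij) ?_ ?_ ?_ h
    · simp [we_apply, dl_apply, hij, hki, hkj, Ne.symm hij, Ne.symm hki, Ne.symm hkj]
    · intro h0
      have := LinearMap.congr_fun h0 (dl k i)
      simp [we_apply, dl_apply, hij, hki, hkj, Ne.symm hij, Ne.symm hki, Ne.symm hkj] at this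
    · simp [we_apply, dl_apply, hij, hki, hkj, Ne.symm hij, Ne.symm hki, Ne.symm hkj]; norm_num
  have col : ∀ i j, i ≠ j → Gd L (A0 n) f κ (ee i j) → ∀ k, k ≠ j → Gd L (A0 n) f κ (ee k j) := by
    intro i j hij h k hk
    by_cases hki : k = i
    · rw [hki]; exact h
    · exact sA i j k hij hki hk h
  have row : ∀ i j, i ≠ j → Gd L (A0 n) f κ (ee i j) → ∀ k, k ≠ i → Gd L (A0 n) f κ (ee i k) := by
    intro i j hij h k hk
    by_cases hkj : k = j
    · rw [hkj]; exact h
    · exact sB i j k hij hk hkj h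
  have all : ∀ i j, i ≠ j → Gd L (A0 n) f κ (ee i j) := by
    intro i j hij
    by_cases hi : i = j0
    · subst hi
      have h1 := col _ _ hij0 hg k0 (Ne.symm hjk0)
      have h2 := row _ _ (Ne.symm hjk0) h1 i0 hik0
      have h3 := col _ _ (Ne.symm hik0) h2 i (Ne.symm hij0)
      exact row _ _ (Ne.symm hij0) h3 j (Ne.symm hij)
    · exact row _ _ hi (col _ _ hij0 hg i hi) j (Ne.symm hij)
  refine ⟨κ, hκ, all, ?_⟩
  intro i j l hij hli hlj
  obtain ⟨k, hk⟩ := avoid {i, j, l} (lt_of_le_of_lt Finset.card_le_three (by omega))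
  simp only [Finset.mem_insert, Finset.mem_singleton, not_or] at hk
  obtain ⟨hki, hkj, hkl⟩ := hk
  rw [← TT_ee (k := k) hli hlj]
  refine gd_prop G hf hw (dl i l + dl k l) hκ (TT_hom hL hij hki hkj) (ee_hom hL hkl) ?_ ?_ ?_ (all _ _ hkl)
  · simp [wT_apply hij, dl_apply, hij, hki, hkj, hli, hlj, hkl, Ne.symm hij, Ne.symm hki, Ne.symm hkj, Ne.symm hli, Ne.symm hlj, Ne.symm hkl]
  · intro h0
    have := LinearMap.congr_fun h0 (dl l k)
    simp [wT_apply hij, dl_apply, hij, hki, hkj, hli, hlj, hkl, Ne.symm hij, Ne.symm hki, Ne.symm hkj, Ne.symm hli, Ne.symm hlj, Ne.symm hkl] at this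
  · simp [we_apply, dl_apply, hij, hki, hkj, hli, hlj, hkl, Ne.symm hij, Ne.symm hki, Ne.symm hkj, Ne.symm hli, Ne.symm hlj, Ne.symm hkl]; norm_num

lemma ee_ne (i j : Fin n) : ee i j ≠ 0 := by
  intro h
  have := congrArg (fun D : E n => D (mono n {j}) {i}) h
  simp [ee_x] at this

theorem S_core (hL : SType L) (hn : 4 ≤ n) {pf : ZMod 2} {f : E n →ₗ[ℂ] E n →ₗ[ℂ] E n} (hf : IsSuperBider n L pf f) :
    ∃ κ : ℂ, ∀ x ∈ L, ∀ y ∈ L, f x y = κ • sbL n x y := by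
  refine core hL.good (S_offsep hL hn)
    ({e | ∃ i j, i ≠ j ∧ e = ee i j} ∪ {e | ∃ i j k, i ≠ j ∧ k ≠ i ∧ k ≠ j ∧ e = TT i j k}) ?_ ?_ ?_ ?_ hf
  · rintro e (⟨i, j, h, rfl⟩ | ⟨i, j, k, h, h1, h2, rfl⟩)
    · exact ⟨_, _, ee_hom hL h⟩
    · exact ⟨_, _, TT_hom hL h h1 h2⟩
  · intro pf f hf hw
    obtain ⟨κ, hκ, h1, h2⟩ := S_H4 hL hn pf f hf hw
    refine ⟨κ, hκ, ?_⟩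
    rintro e (⟨i, j, h, rfl⟩ | ⟨i, j, k, h, h3, h4, rfl⟩)
    · exact h1 _ _ h
    · exact h2 _ _ _ h h3 h4
  · intro z hz h
    obtain ⟨i, j, k, l, hij, hik, hil, hjk, hjl, hkl⟩ := four hn
    refine centralizer (by omega) (hL.le hz) ?_ (k := k) hij ?_
    · intro i j hij
      obtain ⟨k, hk⟩ := avoid {i, j} (by rw [Finset.card_pair hij]; omega)
      simp only [Finset.mem_insert, Finset.mem_singleton, not_or] at hk
      rw [← ee_ee (k := k) hij]
      exact h _ (Or.inl ⟨_, _, Ne.symm hk.1, rfl⟩) _ (Or.inl ⟨_, _, hk.2, rfl⟩)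
    · rw [← TT_ee (k := l) (Ne.symm hik) (Ne.symm hjk)]
      exact h _ (Or.inr ⟨_, _, _, hij, Ne.symm hil, Ne.symm hjl, rfl⟩) _ (Or.inl ⟨_, _, Ne.symm hkl, rfl⟩)
  · obtain ⟨i, j, k, l, hij, hik, hil, hjk, hjl, hkl⟩ := four hn
    refine ⟨ee i k, Or.inl ⟨_, _, hik, rfl⟩, ee k j, Or.inl ⟨_, _, Ne.symm hjk, rfl⟩, ?_⟩
    rw [ee_ee hij]; exact ee_ne _ _

end

section
variable {n : ℕ}

lemma cc_cc (i : Fin n) : cidx n (cidx n i) = i := by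
  apply Fin.ext
  have := i.isLt
  simp only [cidx]
  split_ifs <;> omega

lemma cc_inj {i j : Fin n} (h : cidx n i = cidx n j) : i = j := by
  rw [← cc_cc i, h, cc_cc]

lemma sum_cc {M : Type*} [AddCommMonoid M] (F : Fin n → M) : ∑ i, F (cidx n i) = ∑ i, F i :=
  Fintype.sum_bijective (cidx n) ⟨fun _ _ h => cc_inj h, fun i => ⟨_, cc_cc i⟩⟩ _ _ (fun _ => rfl)

lemma DH_eq (f : Lambda n) : DHmap n f = Wmap n (fun k => P (cidx n k) (par n f)) := by
  show ∑ i, mulOp n (P i (par n f)) * P (cidx n i) = ∑ k, mulOp n (P (cidx n k) (par n f)) * P k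
  rw [← sum_cc (fun k => mulOp n (P (cidx n k) (par n f)) * P k)]
  simp [cc_cc]

lemma DH_x (f : Lambda n) (k : Fin n) : DHmap n f (mono n {k}) = P (cidx n k) (par n f) := by
  rw [DH_eq, Wmap_x]

lemma DH_S (f : Lambda n) : DHmap n f ∈ Sn n := by
  rw [DH_eq]
  refine ⟨_, ?_, rfl⟩
  refine LinearMap.mem_ker.2 ?_
  show ∑ k, P k (P (cidx n k) (par n f)) = 0
  have h : ∑ k, P k (P (cidx n k) (par n f)) = - ∑ k, P k (P (cidx n k) (par n f)) := by
    conv_lhs => rw [← sum_cc]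
    rw [← Finset.sum_neg_distrib]
    refine Finset.sum_congr rfl fun k _ => ?_
    rw [cc_cc, ← Module.End.mul_apply, P_anti]; rfl
  have := self_eq_neg.1 h
  exact this

lemma DH_W (f : Lambda n) : DHmap n f ∈ Wn n := ((Sn_iff _).1 (DH_S f)).1
lemma DH_top (f g : Lambda n) : DHmap n f g Finset.univ = 0 := ((Sn_iff _).1 (DH_S f)).2 g

lemma P_lpar {p : ZMod 2} {f : Lambda n} (k : Fin n) (h : f ∈ lpar n p) : P k f ∈ lpar n (p + 1) :=
  P_odd k p f h

lemma DH_epar {p : ZMod 2} {f : Lambda n} (h : f ∈ lpar n p) : DHmap n f ∈ epar n p := by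
  have hp : par n f ∈ lpar n p := by
    rw [(lpar_iff _ _).1 h]; exact Submodule.smul_mem _ _ h
  rw [DH_eq]
  show (∑ k, mulOp n (P (cidx n k) (par n f)) * P k : E n) ∈ epar n p
  refine Submodule.sum_mem _ fun k _ => ?_
  have := epar_mul (mulOp_epar (P_lpar (cidx n k) hp)) (P_odd k)
  rwa [add_assoc, z2_11, add_zero] at this

lemma W_one {D : E n} (h : D ∈ Wn n) : D (mono n ∅) = 0 := by
  obtain ⟨F, rfl⟩ := h
  rw [Wmap_apply]
  simp [P_one]

lemma P_W (c : Fin n) : P c ∈ Wn n := by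
  have := MP_mem (mono n ∅) c
  rwa [one_mul_op, one_mul] at this

lemma P_DH (c : Fin n) (f : Lambda n) : sbL n (P c) (DHmap n f) = DHmap n (P c f) := by
  apply W_ext (Wn_br _ (P_W c) _ (DH_W f)) (DH_W _)
  intro k
  rw [sb_od (P_odd c), LinearMap.sub_apply, Module.End.mul_apply, Module.End.mul_apply, DH_x, DH_x, P_x, par_P]
  have h0 : cj (DHmap n f) (if c = k then mono n ∅ else 0) = 0 := by
    split_ifs
    · exact W_one (Wn_cj (DH_W f))
    · simp
  rw [h0, sub_zero, ← Module.End.mul_apply, P_anti]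
  simp

lemma mul_comm_hom {p q : ZMod 2} {f g : Lambda n} (hf : f ∈ lpar n p) (hg : g ∈ lpar n q) :
    mulOp n f g = sgn (p * q) • mulOp n g f := by
  have := sb_mul_mul f g
  rw [sb_hom (mulOp_epar hf) (mulOp_epar hg)] at this
  have := congrArg (fun D : E n => D (mono n ∅)) this
  simpa [mul_op_one, sub_eq_zero] using this

lemma DH_apply (f g : Lambda n) : DHmap n f g = ∑ i, mulOp n (P i (par n f)) (P (cidx n i) g) := by
  show (∑ i, mulOp n (P i (par n f)) * P (cidx n i) : E n) g = _
  rw [LinearMap.sum_apply]; rfl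

lemma DH_anti {p q : ZMod 2} {f g : Lambda n} (hf : f ∈ lpar n p) (hg : g ∈ lpar n q) :
    DHmap n f g = -(sgn (p * q) • DHmap n g f) := by
  rw [DH_apply, DH_apply, ← sum_cc (fun i => mulOp n (P i (par n g)) (P (cidx n i) f)), Finset.smul_sum, ← Finset.sum_neg_distrib]
  refine Finset.sum_congr rfl fun i _ => ?_
  rw [cc_cc, (lpar_iff _ _).1 hf, (lpar_iff _ _).1 hg]
  simp only [map_smul, LinearMap.smul_apply]
  rw [mul_comm_hom (P_lpar i hf) (P_lpar (cidx n i) hg), smul_smul, smul_smul, ← neg_smul]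
  congr 1
  rcases z2 p with rfl | rfl <;> rcases z2 q with rfl | rfl <;> simp [z2_11]

lemma DH_lpar {p q : ZMod 2} {f g : Lambda n} (hf : f ∈ lpar n p) (hg : g ∈ lpar n q) :
    DHmap n f g ∈ lpar n (q + p) := DH_epar hf q g hg

lemma DH_br {p q : ZMod 2} {f g : Lambda n} (hf : f ∈ lpar n p) (hg : g ∈ lpar n q) :
    sbL n (DHmap n f) (DHmap n g) = DHmap n (DHmap n f g) := by
  apply W_ext (Wn_br _ (DH_W f) _ (DH_W g)) (DH_W _)
  intro k
  have e1 := congrArg (fun D : E n => D g) (P_DH (cidx n k) f)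
  rw [sb_hom (P_odd _) (DH_epar hf)] at e1
  simp only [LinearMap.sub_apply, LinearMap.smul_apply, Module.End.mul_apply] at e1
  rw [DH_anti (P_lpar (cidx n k) hf) hg] at e1
  rw [sb_hom (DH_epar hf) (DH_epar hg), LinearMap.sub_apply, LinearMap.smul_apply, Module.End.mul_apply, Module.End.mul_apply, DH_x, DH_x, DH_x,
    (lpar_iff _ _).1 (DH_lpar hf hg), (lpar_iff _ _).1 hf, (lpar_iff _ _).1 hg]
  simp only [map_smul]
  rw [sub_eq_iff_eq_add.1 e1, smul_add, smul_neg, smul_smul, smul_smul, smul_smul]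
  rcases z2 p with rfl | rfl <;> rcases z2 q with rfl | rfl <;> simp [z2_11] <;> abel

variable (n) in
/-- torus of H -/
def AH : Submodule ℂ (Fin n → ℂ) where
  carrier := {a | ∀ i, a i + a (cidx n i) = 0}
  add_mem' := by intro a b ha hb i; simp only [Pi.add_apply]; linear_combination ha i + hb i
  zero_mem' := by intro i; simp
  smul_mem' := by intro c a ha i; simp only [Pi.smul_apply, smul_eq_mul]; linear_combination c * ha i

lemma AH_cc (a : AH n) (i : Fin n) : (a : Fin n → ℂ) (cidx n i) = - (a : Fin n → ℂ) i := by
  linear_combination a.2 i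

lemma Hn_span (V : Submodule ℂ (E n)) (h : ∀ S, S ≠ Finset.univ → DHmap n (mono n S) ∈ V) : Hn n ≤ V := by
  rintro _ ⟨f, hf, rfl⟩
  have hf : f Finset.univ = 0 := hf
  rw [lam_sum f, map_sum]
  refine Submodule.sum_mem _ fun S _ => ?_
  rw [map_smul]
  by_cases hS : S = Finset.univ
  · rw [hS, hf, zero_smul]; exact V.zero_mem
  · exact V.smul_mem _ (h S hS)

lemma DH_mem {f : Lambda n} (h : f Finset.univ = 0) : DHmap n f ∈ Hn n := ⟨f, h, rfl⟩

lemma DH_wt (S : Finset (Fin n)) : IsWt (AH n) (wtS (AH n) S) (DHmap n (mono n S)) := by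
  have e : DHmap n (mono n S) = ∑ i, mulOp n (P i (par n (mono n S))) * P (cidx n i) := rfl
  rw [e]
  apply isWt_sum
  intro i _
  rw [par_mono, map_smul, map_smul, smul_mul_assoc, P_mono]
  apply isWt_smul
  split_ifs with h
  · rw [map_smul, smul_mul_assoc]
    apply isWt_smul
    have := MP_wt (A := AH n) (S.erase i) (cidx n i)
    convert this using 1
    ext a
    simp [AH_cc, Finset.sum_erase_eq_sub h]
  · simp only [map_zero, zero_mul]; exact isWt_zero

lemma mono_top {S : Finset (Fin n)} (h : S ≠ Finset.univ) : mono n S Finset.univ = 0 := mono_ne (Ne.symm h)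

lemma Hn_cj : ∀ x ∈ Hn n, cj x ∈ Hn n := by
  intro x hx
  refine Hn_span ((Hn n).comap cj) (fun S hS => ?_) hx
  rw [Submodule.mem_comap, (epar_iff _ _).1 (DH_epar (mono_lpar S))]
  exact Submodule.smul_mem _ _ (DH_mem (mono_top hS))

lemma Hn_pr (μ : Module.Dual ℂ (AH n)) : ∀ x ∈ Hn n, pr μ x ∈ Hn n := by
  intro x hx
  refine Hn_span ((Hn n).comap (pr μ)) (fun S hS => ?_) hx
  rw [Submodule.mem_comap]
  by_cases h : μ = wtS (AH n) S
  · rw [h, pr_same (DH_wt S)]; exact DH_mem (mono_top hS)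
  · rw [pr_other (DH_wt S) h]; exact Submodule.zero_mem _

lemma Hn_br : ∀ x ∈ Hn n, ∀ y ∈ Hn n, sbL n x y ∈ Hn n := by
  intro x hx y hy
  refine Hn_span ((Hn n).comap ((sbL n).flip y)) (fun S _ => ?_) hx
  rw [Submodule.mem_comap, LinearMap.flip_apply]
  refine Hn_span ((Hn n).comap (sbL n (DHmap n (mono n S)))) (fun T _ => ?_) hy
  rw [Submodule.mem_comap, DH_br (mono_lpar S) (mono_lpar T)]
  exact DH_mem (DH_top _ _)

lemma P_Xx (j i l : Fin n) : P j (X i (mono n {l})) = (if j = i then mono n {l} else 0) - (if j = l then mono n {i} else 0) := by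
  rw [← Module.End.mul_apply]
  by_cases h : j = i
  · subst h
    rw [PX_same, LinearMap.sub_apply, Module.End.mul_apply, P_x, if_pos rfl]
    split_ifs <;> simp [X_one]
  · rw [PX_diff h, LinearMap.neg_apply, Module.End.mul_apply, P_x]
    split_ifs <;> simp [X_one]

lemma X_lpar {p : ZMod 2} {f : Lambda n} (k : Fin n) (h : f ∈ lpar n p) : X k f ∈ lpar n (p + 1) :=
  X_odd k p f h

lemma x_odd (k : Fin n) : mono n {k} ∈ lpar n 1 := by
  have := mono_lpar ({k} : Finset (Fin n)); simpa using this
lemma xx_even (a b : Fin n) : X a (mono n {b}) ∈ lpar n 0 := by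
  have := X_lpar a (x_odd b); rwa [z2_11] at this
lemma xxx_odd (k a b : Fin n) : X k (X a (mono n {b})) ∈ lpar n 1 := by
  have := X_lpar k (xx_even a b); rwa [zero_add] at this

lemma X_top (k : Fin n) {m : ℕ} {f : Lambda n} (h : ∀ S, m < S.card → f S = 0) : ∀ S, m + 1 < S.card → X k f S = 0 := by
  intro S hS
  rw [app_sum]
  refine Finset.sum_eq_zero fun T _ => ?_
  rw [X_mono]
  by_cases hT : m < T.card
  · rw [h T hT, zero_mul]
  split_ifs with hk
  · simp
  · rw [Pi.smul_apply, mono_ne]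
    · simp
    · rintro rfl
      rw [Finset.card_insert_of_notMem hk] at hS; omega

lemma x_card (k : Fin n) : ∀ S : Finset (Fin n), 1 < S.card → mono n {k} S = 0 := by
  intro S hS; apply mono_ne; rintro rfl; simp at hS

lemma xx_top (hn : 4 < n) (a b : Fin n) : X a (mono n {b}) Finset.univ = 0 :=
  X_top a (x_card b) _ (by simp; omega)
lemma xxx_top (hn : 4 < n) (k a b : Fin n) : X k (X a (mono n {b})) Finset.univ = 0 :=
  X_top k (X_top a (x_card b)) _ (by simp; omega)
lemma x_top (hn : 4 < n) (b : Fin n) : mono n {b} Finset.univ = 0 :=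
  x_card b _ (by simp; omega)

lemma hd_H (hn : 4 < n) (a : AH n) : hd (a : Fin n → ℂ) ∈ Hn n := by
  have : hd (a : Fin n → ℂ) = DHmap n (∑ i, (-(1/2) * (a : Fin n → ℂ) i) • X i (mono n {cidx n i})) := by
    apply W_ext (hd_W _) (DH_W _)
    intro k
    rw [DH_x, hd_mono, Finset.sum_singleton]
    simp only [map_sum, map_smul, (lpar_iff _ _).1 (xx_even _ _), sgn_zero, one_smul, P_Xx]
    simp only [smul_sub, smul_ite, smul_zero, Finset.sum_sub_distrib]
    have e : ∀ i : Fin n, (cidx n k = cidx n i) = (k = i) := fun i => propext ⟨fun h => cc_inj h, fun h => by rw [h]⟩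
    simp only [e, Finset.sum_ite_eq, Finset.mem_univ, if_true, cc_cc, AH_cc]
    module
  rw [this]
  apply DH_mem
  rw [Finset.sum_apply]
  exact Finset.sum_eq_zero fun i _ => by rw [Pi.smul_apply, xx_top hn, smul_zero]

lemma H_good (hn : 4 < n) : Good (Hn n) (AH n) := ⟨Hn_br, Hn_pr, Hn_cj, hd_H hn⟩

end

section
variable {n : ℕ}

def nf (c : Fin n) : Prop := cidx n c ≠ c
def no (a b : Fin n) : Prop := a ≠ b ∧ a ≠ cidx n b

lemma no_symm {a b : Fin n} (h : no a b) : no b a :=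
  ⟨Ne.symm h.1, fun e => h.2 (by rw [e, cc_cc])⟩
lemma no_cc {a b : Fin n} (h : no a b) : no a (cidx n b) :=
  ⟨h.2, by rw [cc_cc]; exact h.1⟩
lemma no_cc_left {a b : Fin n} (h : no a b) : no (cidx n a) b := no_symm (no_cc (no_symm h))
lemma nf_cc {a : Fin n} (h : nf a) : nf (cidx n a) := by
  unfold nf at *; rw [cc_cc]; exact Ne.symm h

lemma base_idx (hn : 4 < n) : ∃ a b : Fin n, nf a ∧ nf b ∧ no a b := by
  refine ⟨⟨0, by omega⟩, ⟨1, by omega⟩, ?_, ?_, ?_, ?_⟩ <;> simp only [nf, Ne, Fin.ext_iff, cidx] <;> (try split_ifs) <;> (first | omega | simp)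

lemma ex_nf (hn : 4 < n) (c : Fin n) : ∃ b, nf b ∧ no b c := by
  obtain ⟨a, b, ha, hb, hab⟩ := base_idx hn
  by_cases h : no a c
  · exact ⟨a, ha, h⟩
  · refine ⟨b, hb, ?_⟩
    unfold no at h
    by_cases h1 : a = c
    · subst h1; exact no_symm hab
    · have h2 : a = cidx n c := by
        by_contra h2; exact h ⟨h1, h2⟩
      have : c = cidx n a := by rw [h2, cc_cc]
      rw [this]
      exact no_cc (no_symm hab)

lemma ex_third (hn : 4 < n) (a c : Fin n) : ∃ b, no b a ∧ no b c := by
  obtain ⟨b, hb⟩ := avoid {a, cidx n a, c, cidx n c} (lt_of_le_of_lt Finset.card_le_four hn)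
  simp only [Finset.mem_insert, Finset.mem_singleton, not_or] at hb
  exact ⟨b, ⟨hb.1, hb.2.1⟩, ⟨hb.2.2.1, hb.2.2.2⟩⟩

lemma two_fixed {a b : Fin n} (h : no a b) (ha : ¬ nf a) : nf b := by
  intro hb
  simp only [nf, not_not] at ha
  apply h.1
  rw [Fin.ext_iff] at *
  have := a.isLt
  have := b.isLt
  simp only [cidx] at ha hb
  split_ifs at ha hb <;> omega

def hh (c : Fin n) : AH n := ⟨Pi.single c 1 - Pi.single (cidx n c) 1, by
  intro i
  have e : (cidx n i = c) = (i = cidx n c) := propext ⟨fun h => by rw [← h, cc_cc], fun h => by rw [h, cc_cc]⟩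
  have e' : (cidx n i = cidx n c) = (i = c) := propext ⟨fun h => cc_inj h, fun h => by rw [h]⟩
  simp only [Pi.sub_apply, Pi.single_apply, e, e']
  ring⟩

lemma hh_self {c : Fin n} (h : nf c) : (hh c : Fin n → ℂ) c = 1 := by
  simp [hh, Pi.single_apply, Ne.symm h]
lemma hh_other {c i : Fin n} (h : no c i) : (hh c : Fin n → ℂ) i = 0 := by
  have := no_symm h
  simp [hh, Pi.single_apply, this.1, this.2]
lemma hh_other' {c i : Fin n} (h : no i c) : (hh c : Fin n → ℂ) i = 0 := hh_other (no_symm h)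
lemma AH_fixed {c : Fin n} (h : ¬ nf c) (a : AH n) : (a : Fin n → ℂ) c = 0 := by
  have := AH_cc a c
  simp only [nf, not_not] at h
  rw [h] at this
  linear_combination this / 2

def lw (μ : Module.Dual ℂ (AH n)) (f : Lambda n) : Prop := ∀ S, f S ≠ 0 → wtS (AH n) S = μ

lemma lw_DH {μ : Module.Dual ℂ (AH n)} {f : Lambda n} (h : lw μ f) : IsWt (AH n) μ (DHmap n f) := by
  rw [lam_sum f, map_sum]
  apply isWt_sum
  intro S _
  rw [map_smul]
  by_cases hS : f S = 0
  · rw [hS, zero_smul]; exact isWt_zero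
  · exact isWt_smul _ (h S hS ▸ DH_wt S)

lemma lw_x (k : Fin n) : lw (wtS (AH n) {k}) (mono n {k}) := by
  intro S hS
  have : S = {k} := by
    by_contra h; exact hS (mono_ne h)
  rw [this]

lemma lw_X {μ : Module.Dual ℂ (AH n)} {f : Lambda n} (k : Fin n) (h : lw μ f) : lw (wtS (AH n) {k} + μ) (X k f) := by
  intro S hS
  rw [app_sum] at hS
  obtain ⟨T, _, hT⟩ := Finset.exists_ne_zero_of_sum_ne_zero hS
  rw [X_mono] at hT
  have h1 := h T (left_ne_zero_of_mul hT)
  split_ifs at hT with hk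
  · simp at hT
  · have : S = insert k T := by
      by_contra hc
      rw [Pi.smul_apply, mono_ne hc] at hT
      simp at hT
    rw [this, ← h1]
    ext a
    simp [Finset.sum_insert hk]

lemma Hn_W {z : E n} (hz : z ∈ Hn n) : z ∈ Wn n := by
  obtain ⟨f, -, rfl⟩ := hz; exact DH_W f

def KK (a b : Fin n) : E n := DHmap n (X a (mono n {b}))
def RR (k a b : Fin n) : E n := DHmap n (X k (X a (mono n {b})))

lemma DH_lin (c : Fin n) : DHmap n (mono n {c}) = - P (cidx n c) := by
  apply W_ext (DH_W _) (Submodule.neg_mem _ (P_W _))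
  intro k
  have e : (cidx n k = c) = (cidx n c = k) := propext ⟨fun h => by rw [← h, cc_cc], fun h => by rw [← h, cc_cc]⟩
  rw [DH_x, LinearMap.neg_apply, P_x, (lpar_iff _ _).1 (x_odd c), map_smul, P_x]
  simp only [e]
  split_ifs <;> simp

lemma P_eq (c : Fin n) : P c = - DHmap n (mono n {cidx n c}) := by
  rw [DH_lin, cc_cc, neg_neg]

def wP (c : Fin n) : Module.Dual ℂ (AH n) := - wtS (AH n) {c}
def wK (a b : Fin n) : Module.Dual ℂ (AH n) := wtS (AH n) {a} + wtS (AH n) {b}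
def wR (k a b : Fin n) : Module.Dual ℂ (AH n) := wtS (AH n) {k} + (wtS (AH n) {a} + wtS (AH n) {b})
lemma wP_apply (c : Fin n) (h : AH n) : wP c h = - (h : Fin n → ℂ) c := by simp [wP]
lemma wK_apply (a b : Fin n) (h : AH n) : wK a b h = (h : Fin n → ℂ) a + (h : Fin n → ℂ) b := by simp [wK]
lemma wR_apply (k a b : Fin n) (h : AH n) : wR k a b h = (h : Fin n → ℂ) k + ((h : Fin n → ℂ) a + (h : Fin n → ℂ) b) := by simp [wR]

lemma P_hom (hn : 4 < n) (c : Fin n) : Hom (Hn n) (AH n) (wP c) 1 (P c) := by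
  refine ⟨?_, P_odd c, ?_⟩
  · rw [P_eq]; exact Submodule.neg_mem _ (DH_mem (x_top hn _))
  · have := MP_wt (A := AH n) ∅ c
    rw [one_mul_op, one_mul] at this
    convert this using 1
    ext a; simp [wP]

lemma K_hom (hn : 4 < n) (a b : Fin n) : Hom (Hn n) (AH n) (wK a b) 0 (KK a b) :=
  ⟨DH_mem (xx_top hn a b), DH_epar (xx_even a b), lw_DH (lw_X _ (lw_x _))⟩
lemma R_hom (hn : 4 < n) (k a b : Fin n) : Hom (Hn n) (AH n) (wR k a b) 1 (RR k a b) :=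
  ⟨DH_mem (xxx_top hn k a b), DH_epar (xxx_odd k a b), lw_DH (lw_X _ (lw_X _ (lw_x _)))⟩

lemma xx_swap (a b : Fin n) : X a (mono n {b}) = - X b (mono n {a}) := by
  rw [← X_one, ← X_one, ← Module.End.mul_apply, X_anti]; rfl
lemma KK_swap (a b : Fin n) : KK a b = - KK b a := by
  rw [KK, xx_swap, map_neg]; rfl

lemma PK {k b : Fin n} (h : k ≠ b) : sbL n (P k) (KK k b) = - P (cidx n b) := by
  rw [KK, P_DH, P_Xx, if_pos rfl, if_neg h, sub_zero, DH_lin]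
lemma PK0 {k a b : Fin n} (h : k ≠ a) (h' : k ≠ b) : sbL n (P k) (KK a b) = 0 := by
  rw [KK, P_DH, P_Xx, if_neg h, if_neg h', sub_zero, map_zero]
lemma PP (a b : Fin n) : sbL n (P a) (P b) = 0 := by
  rw [P_eq b, map_neg, P_DH, P_x]
  split_ifs
  · have : DHmap n (mono n ∅) = 0 := by
      apply W_ext (DH_W _) (Submodule.zero_mem _)
      intro k
      rw [DH_x, par_mono, map_smul, P_one]; simp
    rw [this, neg_zero]
  · simp
lemma PR {k a b : Fin n} (h : k ≠ a) (h' : k ≠ b) : sbL n (P k) (RR k a b) = KK a b := by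
  rw [RR, P_DH, ← Module.End.mul_apply, PX_same, LinearMap.sub_apply, Module.End.mul_apply, P_Xx, if_neg h, if_neg h', sub_zero, map_zero]
  simp [KK]

lemma KK_W (a b : Fin n) : KK a b ∈ Wn n := DH_W _
lemma KK_even (a b : Fin n) : KK a b ∈ epar n 0 := DH_epar (xx_even a b)

lemma K_x (a b k : Fin n) : KK a b (mono n {k}) = (if cidx n k = a then mono n {b} else 0) - (if cidx n k = b then mono n {a} else 0) := by
  rw [KK, DH_x, (lpar_iff _ _).1 (xx_even a b), sgn_zero, one_smul, P_Xx]

lemma der_even {D : E n} (h : D ∈ Wn n) (he : D ∈ epar n 0) (f g : Lambda n) : D (mulOp n f g) = mulOp n (D f) g + mulOp n f (D g) := by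
  have := Wn_char1 h f
  rw [sb_ev he] at this
  have := congrArg (fun T : E n => T g) this
  simp only [LinearMap.sub_apply, Module.End.mul_apply] at this
  exact sub_eq_iff_eq_add.1 this

lemma KK_br {a b c : Fin n} (h1 : no a b) (h2 : no b c) (h3 : no a c) : sbL n (KK a b) (KK (cidx n b) c) = - KK a c := by
  have e : KK a b (X (cidx n b) (mono n {c})) = - X a (mono n {c}) := by
    rw [X, der_even (KK_W a b) (KK_even a b), K_x, K_x, cc_cc, if_neg (Ne.symm h1.1), if_pos rfl,
      if_neg (Ne.symm h3.2), if_neg (Ne.symm h2.2)]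
    simp [X]
  have := DH_br (xx_even a b) (xx_even (cidx n b) c)
  change sbL n (KK a b) (KK (cidx n b) c) = DHmap n (KK a b (X (cidx n b) (mono n {c}))) at this
  rw [this, e, map_neg]; rfl

lemma const_of_P {g : Lambda n} (h : ∀ j, P j g = 0) : g = g ∅ • mono n ∅ := by
  funext S
  by_cases hS : S = ∅
  · subst hS; simp
  · obtain ⟨j, hj⟩ := Finset.nonempty_iff_ne_empty.2 hS
    rw [P_zero_entry (h j) hj, Pi.smul_apply, mono_ne hS, smul_zero]

lemma P_comm {z : E n} (hz : z ∈ Wn n) {c : Fin n} (h : sbL n (P c) z = 0) (k : Fin n) : P c (z (mono n {k})) = 0 := by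
  rw [sb_od (P_odd c)] at h
  have := congrArg (fun D : E n => D (mono n {k})) h
  simp only [LinearMap.sub_apply, Module.End.mul_apply, P_x, LinearMap.zero_apply] at this
  have h0 : cj z (if c = k then mono n ∅ else 0) = 0 := by
    split_ifs
    · exact W_one (Wn_cj hz)
    · simp
  rw [h0, sub_zero] at this
  exact this

lemma H_central (hn : 4 < n) {z : E n} (hz : z ∈ Wn n) (h1 : ∀ c, sbL n (P c) z = 0)
    (h2 : ∀ a b, no a b → sbL n (KK a b) z = 0) : z = 0 := by
  apply W_ext hz (Submodule.zero_mem _)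
  intro b
  obtain ⟨a, -, hab⟩ := ex_nf hn b
  have h := h2 a b hab
  rw [sb_ev (KK_even a b)] at h
  have := congrArg (fun D : E n => D (mono n {cidx n a})) h
  simp only [LinearMap.sub_apply, Module.End.mul_apply, LinearMap.zero_apply] at this
  rw [const_of_P (fun c => P_comm hz (h1 c) (cidx n a)), map_smul, W_one (KK_W a b), K_x, cc_cc, if_pos rfl, if_neg hab.1] at this
  simpa using this

/-- the choice of an auxiliary index -/
lemma exK0 (hn : 4 < n) {a b : Fin n} (hab : no a b) (ha : nf a) : ∃ k : Fin n, nf k ∧ k ≠ a ∧ k ≠ b ∧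
    (∃ h : AH n, wR k a b h = 0 ∧ (h : Fin n → ℂ) k ≠ 0) ∧ ∃ h : AH n, wR k a b h ≠ 0 ∧ wK a b h = 0 := by
  by_cases hb : nf b
  · refine ⟨cidx n a, nf_cc ha, ha, (no_cc_left hab).1, ⟨hh a, ?_, ?_⟩, ⟨hh b - hh a, ?_, ?_⟩⟩
    · rw [wR_apply, AH_cc, hh_other hab]; ring
    · rw [AH_cc, hh_self ha]; norm_num
    · rw [wR_apply, AH_cc, Submodule.coe_sub, Pi.sub_apply, Pi.sub_apply, hh_self ha, hh_self hb, hh_other hab, hh_other' hab]; norm_num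
    · rw [wK_apply, Submodule.coe_sub, Pi.sub_apply, Pi.sub_apply, hh_self ha, hh_self hb, hh_other hab, hh_other' hab]; norm_num
  · obtain ⟨k, hk, hka⟩ := ex_nf hn a
    refine ⟨k, hk, hka.1, fun e => hb (e ▸ hk), ⟨hh k - hh a, ?_, ?_⟩, ⟨hh k, ?_, ?_⟩⟩
    · rw [wR_apply, AH_fixed hb, Submodule.coe_sub, Pi.sub_apply, Pi.sub_apply, hh_self ha, hh_self hk, hh_other hka, hh_other' hka]; norm_num
    · rw [Submodule.coe_sub, Pi.sub_apply, hh_self hk, hh_other' hka]; norm_num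
    · rw [wR_apply, AH_fixed hb, hh_self hk, hh_other hka]; norm_num
    · rw [wK_apply, AH_fixed hb, hh_other hka]; norm_num

lemma exK (hn : 4 < n) {a b : Fin n} (hab : no a b) : ∃ k : Fin n, nf k ∧ k ≠ a ∧ k ≠ b ∧
    (∃ h : AH n, wR k a b h = 0 ∧ (h : Fin n → ℂ) k ≠ 0) ∧ ∃ h : AH n, wR k a b h ≠ 0 ∧ wK a b h = 0 := by
  by_cases ha : nf a
  · exact exK0 hn hab ha
  · obtain ⟨k, h1, h2, h3, h4, h5⟩ := exK0 hn (no_symm hab) (two_fixed hab ha)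
    have e : wR k a b = wR k b a := by unfold wR; rw [add_comm (wtS (AH n) {a})]
    have e' : wK a b = wK b a := by unfold wK; rw [add_comm]
    refine ⟨k, h1, h3, h2, ?_, ?_⟩
    · rw [e]; exact h4
    · rw [e, e']; exact h5

lemma P_of {z : E n} {b c : Fin n} (hbc : b ≠ cidx n c) (h1 : sbL n (sbL n (P b) (KK b (cidx n c))) z = 0) : sbL n (P c) z = 0 := by
  rw [PK hbc, cc_cc, map_neg, LinearMap.neg_apply] at h1
  exact neg_eq_zero.1 h1

lemma H_offsep (hn : 4 < n) : OffSep (Hn n) (AH n) := by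
  intro ν z hz h
  have hP : ∀ c, off ν (wP c) → sbL n (P c) z = 0 := fun c ho => h _ _ _ (P_hom hn c) ho
  have hK : ∀ a b, off ν (wK a b) → sbL n (KK a b) z = 0 := fun a b ho => h _ _ _ (K_hom hn a b) ho
  have h1 : ∀ c, nf c → sbL n (P c) z = 0 := by
    intro c hc
    by_cases ho : off ν (wP c)
    · exact hP c ho
    obtain ⟨b, hb, hbc⟩ := ex_nf hn c
    refine P_of hbc.2 (jac0 (P_odd _) (DH_epar (xx_even _ _)) (hP b ?_) (hK _ _ ?_))
    · refine (off_or ν (hh c) (hh b) ?_ ?_ ?_ ?_).resolve_left ho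
      · rw [wP_apply, hh_self hc]; norm_num
      · rw [wP_apply, hh_other' hbc]; norm_num
      · rw [wP_apply, hh_other hbc]; norm_num
      · rw [wP_apply, hh_self hb]; norm_num
    · refine (off_or ν (hh c + hh b) (hh b) ?_ ?_ ?_ ?_).resolve_left ho
      · rw [wP_apply, Submodule.coe_add, Pi.add_apply, hh_self hc, hh_other hbc]; norm_num
      · rw [wK_apply, AH_cc, Submodule.coe_add, Pi.add_apply, Pi.add_apply, hh_self hc, hh_other hbc, hh_self hb, hh_other' hbc]; norm_num
      · rw [wP_apply, hh_other hbc]; norm_num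
      · rw [wK_apply, AH_cc, hh_self hb, hh_other hbc]; norm_num
  have h2 : ∀ c, sbL n (P c) z = 0 := by
    intro c
    by_cases hc : nf c
    · exact h1 c hc
    obtain ⟨a, b, ha, hb, hab⟩ := base_idx hn
    have hfix : cidx n c = c := by simpa [nf] using hc
    have hx : ∀ d, nf d → d ≠ cidx n c := by rintro d hd rfl; exact hc (by rw [hfix] at hd; exact hd)
    have key : ∀ d, nf d → off ν (wK d c) → sbL n (P c) z = 0 := by
      intro d hd ho
      refine P_of (hx d hd) (jac0 (P_odd _) (DH_epar (xx_even _ _)) (h1 d hd) ?_)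
      have := hK _ _ ho
      rw [hfix]; exact this
    rcases off_or (α := wK a c) (α' := wK b c) ν (hh a) (hh b) (by rw [wK_apply, AH_fixed hc, hh_self ha]; norm_num)
      (by rw [wK_apply, AH_fixed hc, hh_other hab]; norm_num) (by rw [wK_apply, AH_fixed hc, hh_other' hab]; norm_num)
      (by rw [wK_apply, AH_fixed hc, hh_self hb]; norm_num) with ho | ho
    · exact key a ha ho
    · exact key b hb ho
  refine H_central hn (Hn_W hz) h2 ?_
  intro a b hab
  by_cases ho : off ν (wK a b)
  · exact hK a b ho
  obtain ⟨k, hk, hka, hkb, ⟨u, hu, hu'⟩, v, hv, hv'⟩ := exK hn hab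
  rw [← PR hka hkb]
  refine jac0 (P_odd _) (DH_epar (xxx_odd _ _ _)) (h2 k) (h _ _ _ (R_hom hn k a b) ?_)
  refine (off_or ν u v ?_ hu hv' hv).resolve_left ho
  rw [wR_apply] at hu
  rw [wK_apply]
  intro hc; rw [hc, add_zero] at hu; exact hu' hu

end

section
variable {n : ℕ}

lemma wne {μ : Module.Dual ℂ (AH n)} (a : AH n) (h : μ a ≠ 0) : μ ≠ 0 := by
  rintro rfl; exact h (by simp)

lemma sub_c {c : Fin n} (hc : nf c) {S : Finset (Fin n)} (h : ∀ d ∈ S, ¬ no d c) (a : AH n) :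
    wtS (AH n) S a = (if c ∈ S then (a : Fin n → ℂ) c else 0) + (if cidx n c ∈ S then (a : Fin n → ℂ) (cidx n c) else 0) := by
  rw [wtS_apply]
  have e : S = ({c, cidx n c} : Finset (Fin n)).filter (· ∈ S) := by
    ext d
    simp only [Finset.mem_filter, Finset.mem_insert, Finset.mem_singleton]
    refine ⟨fun hd => ⟨?_, hd⟩, fun hd => hd.2⟩
    by_contra hx
    push Not at hx
    exact h d hd hx
  conv_lhs => rw [e]
  rw [Finset.sum_filter, Finset.sum_pair (Ne.symm hc)]

lemma H_base (hn : 4 < n) {pf : ZMod 2} {f : E n →ₗ[ℂ] E n →ₗ[ℂ] E n} (hf : IsSuperBider n (Hn n) pf f)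
    (hw : WtZero (Hn n) (AH n) f) {c : Fin n} (hc : nf c) :
    ∃ κ : ℂ, (pf = 0 ∨ κ = 0) ∧ Gd (Hn n) (AH n) f κ (P c) := by
  have G := H_good hn
  refine gd_init G hf hw (hh c) (P_hom hn c) (by rw [wP_apply, hh_self hc]; norm_num) ?_
  have hzL := (hf.maps _ _ _ (Hom.hd G (hh c)).i _ (P_hom hn c).i).1
  have hzw := hw _ _ _ _ _ _ (Hom.hd G (hh c)) (P_hom hn c)
  have key : ∀ {β q y}, Hom (Hn n) (AH n) β q y → β (hh c) = 0 → β ≠ 0 → sbL n y (P c) = 0 →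
      sbL n y (f (hd (hh c : Fin n → ℂ)) (P c)) = 0 := by
    intro β q y hy h1 h2 h3
    have := hf.eq2 _ _ _ _ (Hom.hd G (hh c)).i y hy.i _ (P_hom hn c).i
    rw [h3, map_zero, f_h_zero G hf hw _ hy h1 h2, map_zero, LinearMap.zero_apply, zero_add] at this
    exact (smul_eq_zero.1 this.symm).resolve_left (sgn_ne _)
  generalize f (hd (hh c : Fin n → ℂ)) (P c) = z at hzL hzw key
  rw [zero_add] at hzw
  have hzW := Hn_W hzL
  have hP1 : ∀ d, nf d → no d c → sbL n (P d) z = 0 := by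
    intro d hd hdc
    refine key (P_hom hn d) ?_ (wne (hh d) ?_) (PP d c)
    · rw [wP_apply, hh_other' hdc, neg_zero]
    · rw [wP_apply, hh_self hd]; norm_num
  have hK1 : ∀ d m, nf d → no d m → no d c → no m c → sbL n (KK d m) z = 0 := by
    intro d m hd hdm hdc hmc
    refine key (K_hom hn d m) ?_ (wne (hh d) ?_) ?_
    · rw [wK_apply, hh_other' hdc, hh_other' hmc, add_zero]
    · rw [wK_apply, hh_self hd, hh_other hdm]; norm_num
    · rw [sb_skew (KK_even d m) (P_odd c), PK0 (Ne.symm hdc.1) (Ne.symm hmc.1), smul_zero, neg_zero]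
  obtain ⟨d0, hd0, hd0c⟩ := ex_nf hn c
  have hP : ∀ d, no d c → sbL n (P d) z = 0 := by
    intro d hdc
    by_cases hd : nf d
    · exact hP1 d hd hdc
    · have hfix : cidx n d = d := by simpa [nf] using hd
      have hne : d0 ≠ cidx n d := by rw [hfix]; rintro rfl; exact hd hd0
      refine P_of hne (jac0 (P_odd _) (KK_even _ _) (hP1 d0 hd0 hd0c) ?_)
      rw [hfix] at hne ⊢
      exact hK1 d0 d hd0 ⟨hne, by rw [hfix]; exact hne⟩ hd0c hdc
  have hS : ∀ k S, z (mono n {k}) S ≠ 0 → (∀ d ∈ S, ¬ no d c) ∧ wtS (AH n) S = wtS (AH n) {k} + wP c := by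
    intro k S h
    refine ⟨fun d hd hdc => h (P_zero_entry (P_comm hzW (hP d hdc) k) hd), ((isWt_iff _ _).1 hzw) _ _ h⟩
  have hk1 : ∀ k, nf k → k ≠ c → z (mono n {k}) = 0 := by
    intro k hk hkc
    funext S
    by_contra h
    obtain ⟨h1, h2⟩ := hS k S h
    by_cases hno : k = cidx n c
    · have h3 := congrArg (fun μ => μ (hh c)) h2
      rw [sub_c hc h1, LinearMap.add_apply, wP_apply, wtS_apply, Finset.sum_singleton, hno, AH_cc, hh_self hc] at h3
      split_ifs at h3 <;> norm_num at h3
    · have hkc' : no k c := ⟨hkc, hno⟩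
      have h3 := congrArg (fun μ => μ (hh k)) h2
      rw [sub_c hc h1, LinearMap.add_apply, wP_apply, wtS_apply, Finset.sum_singleton, AH_cc, hh_self hk, hh_other hkc'] at h3
      split_ifs at h3 <;> norm_num at h3
  have hk2 : ∀ k, k ≠ c → z (mono n {k}) = 0 := by
    intro k hkc
    by_cases hk : nf k
    · exact hk1 k hk hkc
    have hfix : cidx n k = k := by simpa [nf] using hk
    have hne : d0 ≠ k := by rintro rfl; exact hk hd0
    have hno : no k c := ⟨hkc, fun e => hkc (by rw [← hfix, e, cc_cc])⟩
    have h := hK1 d0 k hd0 ⟨hne, by rw [hfix]; exact hne⟩ hd0c hno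
    rw [sb_ev (KK_even d0 k)] at h
    have := congrArg (fun D : E n => D (mono n {cidx n d0})) h
    simp only [LinearMap.sub_apply, Module.End.mul_apply, LinearMap.zero_apply] at this
    rw [hk1 _ (nf_cc hd0) (no_cc_left hd0c).1, K_x, cc_cc, if_pos rfl, if_neg hne, map_zero, sub_zero, zero_sub] at this
    exact neg_eq_zero.1 this
  have hcst : ∀ j, P j (z (mono n {c})) = 0 := by
    obtain ⟨g, -, rfl⟩ := hzL
    intro j
    have h2 := hk2 (cidx n j)
    rw [DH_x, cc_cc] at h2
    rw [DH_x]
    by_cases hj : cidx n j = c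
    · have : j = cidx n c := by rw [← hj, cc_cc]
      rw [this, ← Module.End.mul_apply, P_sq]; rfl
    · rw [← Module.End.mul_apply, P_anti, LinearMap.neg_apply, Module.End.mul_apply, h2 hj, map_zero, neg_zero]
  refine ⟨z (mono n {c}) ∅, W_ext hzW (Submodule.smul_mem _ _ (P_W c)) ?_⟩
  intro k
  rw [LinearMap.smul_apply, P_x]
  by_cases hkc : c = k
  · subst hkc
    rw [if_pos rfl]; exact const_of_P hcst
  · rw [if_neg hkc, smul_zero, hk2 k (Ne.symm hkc)]

lemma H_H4 (hn : 4 < n) (pf : ZMod 2) (f : E n →ₗ[ℂ] E n →ₗ[ℂ] E n) (hf : IsSuperBider n (Hn n) pf f)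
    (hw : WtZero (Hn n) (AH n) f) : ∃ κ : ℂ, (pf = 0 ∨ κ = 0) ∧ (∀ c, nf c → Gd (Hn n) (AH n) f κ (P c)) ∧
      ∀ a b, no a b → Gd (Hn n) (AH n) f κ (KK a b) := by
  have G := H_good hn
  obtain ⟨a0, b0, ha0, hb0, hab0⟩ := base_idx hn
  obtain ⟨κ, hκ, h0⟩ := H_base hn hf hw ha0
  have step : ∀ c t, nf c → nf t → no c t → Gd (Hn n) (AH n) f κ (P c) → Gd (Hn n) (AH n) f κ (P t) := by
    intro c t hc ht hct h
    have hct' := no_cc hct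
    have := gd_prop G hf hw (hh c + hh t) (y := KK c (cidx n t)) (y' := P c) hκ (K_hom hn _ _) (P_hom hn c) ?_ (wne (hh c) ?_) ?_ h
    · rw [sb_skew (KK_even _ _) (P_odd c), PK hct'.1, cc_cc] at this
      have := Gd_smul (1 : ℂ) this
      convert this using 1
      simp
    · rw [wK_apply, AH_cc, Submodule.coe_add, Pi.add_apply, Pi.add_apply, hh_self hc, hh_self ht, hh_other hct, hh_other' hct]; norm_num
    · rw [wK_apply, AH_cc, hh_self hc, hh_other hct]; norm_num
    · rw [wP_apply, Submodule.coe_add, Pi.add_apply, hh_self hc, hh_other' hct]; norm_num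
  have hP : ∀ c, nf c → Gd (Hn n) (AH n) f κ (P c) := by
    intro c hc
    by_cases h : no a0 c
    · exact step a0 c ha0 hc h h0
    · have hb : no b0 c := by
        by_cases h1 : a0 = c
        · subst h1; exact no_symm hab0
        · have h2 : a0 = cidx n c := by
            by_contra h2; exact h ⟨h1, h2⟩
          have : c = cidx n a0 := by rw [h2, cc_cc]
          rw [this]
          exact no_cc (no_symm hab0)
      exact step b0 c hb0 hc hb (step a0 b0 ha0 hb0 hab0 h0)
  refine ⟨κ, hκ, hP, ?_⟩
  intro a b hab
  obtain ⟨k, hk, hka, hkb, ⟨u, hu, hu'⟩, v, hv, hv'⟩ := exK hn hab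
  have := gd_prop G hf hw u hκ (R_hom hn k a b) (P_hom hn k) hu (wne v hv) (by rw [wP_apply]; exact neg_ne_zero.2 hu') (hP k hk)
  rw [sb_skew (R_hom hn k a b).par (P_odd k), PR hka hkb] at this
  have := Gd_smul (1 : ℂ) this
  convert this using 1
  rw [one_mul, sgn_one, Eone_smul, neg_neg, one_smul]

lemma P_ne (c : Fin n) : P c ≠ 0 := by
  intro h
  have := congrArg (fun D : E n => D (mono n {c}) ∅) h
  simp [P_x, mono] at this

theorem H_core (hn : 4 < n) {pf : ZMod 2} {f : E n →ₗ[ℂ] E n →ₗ[ℂ] E n} (hf : IsSuperBider n (Hn n) pf f) :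
    ∃ κ : ℂ, ∀ x ∈ Hn n, ∀ y ∈ Hn n, f x y = κ • sbL n x y := by
  refine core (H_good hn) (H_offsep hn)
    ({e | ∃ c, nf c ∧ e = P c} ∪ {e | ∃ a b, no a b ∧ e = KK a b}) ?_ ?_ ?_ ?_ hf
  · rintro e (⟨c, -, rfl⟩ | ⟨a, b, -, rfl⟩)
    · exact ⟨_, _, P_hom hn c⟩
    · exact ⟨_, _, K_hom hn a b⟩
  · intro pf f hf hw
    obtain ⟨κ, hκ, h1, h2⟩ := H_H4 hn pf f hf hw
    refine ⟨κ, hκ, ?_⟩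
    rintro e (⟨c, hc, rfl⟩ | ⟨a, b, hab, rfl⟩)
    · exact h1 _ hc
    · exact h2 _ _ hab
  · intro z hz h
    refine H_central hn (Hn_W hz) ?_ ?_
    · intro c
      obtain ⟨b, hb, hbc⟩ := ex_nf hn c
      exact P_of hbc.2 (h _ (Or.inl ⟨b, hb, rfl⟩) _ (Or.inr ⟨b, cidx n c, no_cc hbc, rfl⟩))
    · intro a c hac
      obtain ⟨b, hba, hbc⟩ := ex_third hn a c
      have := h _ (Or.inr ⟨a, b, no_symm hba, rfl⟩) _ (Or.inr ⟨cidx n b, c, no_cc_left hbc, rfl⟩)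
      rw [KK_br (no_symm hba) hbc hac, map_neg, LinearMap.neg_apply] at this
      exact neg_eq_zero.1 this
  · obtain ⟨a, b, ha, hb, hab⟩ := base_idx hn
    refine ⟨P a, Or.inl ⟨a, ha, rfl⟩, KK a b, Or.inr ⟨a, b, hab, rfl⟩, ?_⟩
    rw [PK hab.1]
    exact fun h => P_ne _ (neg_eq_zero.1 h)

end

section
variable {n : ℕ}

def entryL (i : Fin n) : E n →ₗ[ℂ] ℂ where
  toFun D := D (mono n {i}) {i}
  map_add' := by intro D F; simp
  map_smul' := by intro c D; simp

lemma entryL_hd (i : Fin n) (a : Fin n → ℂ) : entryL i (hd a) = a i := by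
  change hd a (mono n {i}) {i} = a i
  rw [hd_mono]; simp

lemma diag_hd {D : E n} (h : D ∈ diagSpan n) : ∃ a : Fin n → ℂ, D = hd a := by
  rw [diagSpan, Submodule.mem_span_range_iff_exists_fun] at h
  obtain ⟨a, rfl⟩ := h
  exact ⟨a, (hd_eq a).symm⟩

lemma hd_diag (a : Fin n → ℂ) : hd a ∈ diagSpan n := by
  rw [diagSpan, Submodule.mem_span_range_iff_exists_fun]
  exact ⟨a, (hd_eq a).symm⟩

lemma edeg_of {μ : Module.Dual ℂ (⊤ : Submodule ℂ (Fin n → ℂ))} {D : E n} (h : IsWt ⊤ μ D) {d : ℤ}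
    (hd : μ ⟨1, Submodule.mem_top⟩ = (d : ℂ)) : D ∈ edeg n d := by
  rw [isWt_iff] at h
  intro m g hg U hU
  rw [app_sum]
  refine Finset.sum_eq_zero fun T _ => ?_
  by_cases h1 : g T = 0
  · rw [h1, zero_mul]
  by_cases h2 : D (mono n T) U = 0
  · rw [h2, mul_zero]
  exfalso
  have hT : (T.card : ℤ) = m := by
    by_contra hc; exact h1 (hg T hc)
  have h3 := congrArg (fun ν : Module.Dual ℂ (⊤ : Submodule ℂ (Fin n → ℂ)) => ν ⟨1, Submodule.mem_top⟩) (h T U h2)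
  simp only [LinearMap.add_apply, wtS_apply, Pi.one_apply, Finset.sum_const, hd, nsmul_eq_mul, mul_one] at h3
  apply hU
  rw [← hT]
  exact_mod_cast h3

lemma hd_edeg (a : Fin n → ℂ) : hd a ∈ edeg n 0 := edeg_of (hd_isWt a) (by simp)

def MM (S : Finset (Fin n)) (j : Fin n) : E n := mulOp n (mono n S) * P j

lemma MM_edeg (S : Finset (Fin n)) (j : Fin n) : MM S j ∈ edeg n ((S.card : ℤ) - 1) :=
  edeg_of (MP_wt S j) (by simp)

lemma MM_x (S : Finset (Fin n)) (j : Fin n) : MM S j (mono n {j}) = mono n S := by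
  rw [MM, Module.End.mul_apply, P_x, if_pos rfl, mul_op_one]

lemma MM_ne (S : Finset (Fin n)) (j : Fin n) : MM S j ≠ 0 := by
  intro h
  have := congrFun (congrArg (fun D : E n => D (mono n {j})) h) S
  simp [MM_x] at this

lemma MM_deg {S : Finset (Fin n)} {j : Fin n} {d : ℤ} (h : MM S j ∈ edeg n d) : d = (S.card : ℤ) - 1 := by
  have h1 : mono n {j} ∈ ldeg n 1 := by
    intro T hT
    apply mono_ne
    rintro rfl
    simp at hT
  have h2 := h 1 _ h1 S
  rw [MM_x, mono_self] at h2
  by_contra hc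
  exact one_ne_zero (h2 (by intro e; apply hc; omega))

lemma assemble (t : CT) (f : E n →ₗ[ℂ] E n →ₗ[ℂ] E n) (κ : ℂ)
    (hcore : ∀ x ∈ t.algebra n, ∀ y ∈ t.algebra n, f x y = κ • sbL n x y)
    (hle : t.algebra n ≤ t.prime n) (S : Finset (Fin n)) (j : Fin n) (a : Fin n → ℂ)
    (he : MM S j ∈ t.algebra n) (ha : hd a ∈ t.algebra n) (hc : ∑ i ∈ S, a i - a j ≠ 0)
    (hg0 : hd a ∈ t.grade n 0) (hg : MM S j ∈ t.grade n ((S.card : ℤ) - 1))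
    (hdeg : ∀ d, MM S j ∈ t.grade n d → d = (S.card : ℤ) - 1)
    (hgle : ∀ d, t.grade n d ≤ t.grade' n d) :
    ∃ phi psi : E n →ₗ[ℂ] E n,
      (∀ x ∈ t.algebra n, phi x ∈ t.prime n ∧ psi x ∈ t.prime n) ∧
      (∀ x ∈ t.algebra n, ∀ y ∈ t.algebra n,
        f x y = sbL n (phi x) y ∧ f x y = sbL n x (psi y)) ∧
      (∀ eps : Module.Dual ℂ (t.cartan n), t.HasWeight n f eps →
        ∀ eta : Module.Dual ℂ (t.cartan n), ∀ x ∈ wtsp t n (t.algebra n) eta,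
          phi x ∈ wtsp t n (t.prime n) (eps + eta) ∧
          psi x ∈ wtsp t n (t.prime n) (eps + eta)) ∧
      (∀ i : ℤ, t.HasDeg n f i → ∀ j : ℤ, ∀ x ∈ t.grade n j,
        phi x ∈ t.grade' n (i + j) ∧ psi x ∈ t.grade' n (i + j)) := by
  have wt : ∀ b : Fin n → ℂ, sbL n (hd b) (MM S j) = (∑ i ∈ S, b i - b j) • MM S j := by
    intro b
    have := MP_wt (A := ⊤) S j ⟨b, Submodule.mem_top⟩
    simpa [MM] using this
  have hv : f (hd a) (MM S j) = (κ * (∑ i ∈ S, a i - a j)) • MM S j := by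
    rw [hcore _ ha _ he, wt, smul_smul]
  refine ⟨κ • LinearMap.id, κ • LinearMap.id, ?_, ?_, ?_, ?_⟩
  · intro x hx
    have := Submodule.smul_mem _ κ (hle hx)
    exact ⟨this, this⟩
  · intro x hx y hy
    rw [hcore x hx y hy]
    simp
  · intro eps hw eta x hx
    suffices h : κ • x ∈ wtsp t n (t.prime n) (eps + eta) from ⟨h, h⟩
    by_cases hκ : κ = 0
    · rw [hκ, zero_smul]; exact Submodule.zero_mem _
    have heps : eps = 0 := by
      let ζ : Module.Dual ℂ (t.cartan n) := (∑ i ∈ S, entryL i - entryL j) ∘ₗ (t.cartan n).subtype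
      have hζ : ∀ (b : Fin n → ℂ) (hb : hd b ∈ t.cartan n), ζ ⟨hd b, hb⟩ = ∑ i ∈ S, b i - b j := by
        intro b hb
        simp [ζ, entryL_hd]
      have h1 : hd a ∈ wtsp t n (t.algebra n) 0 := by
        refine ⟨ha, ?_⟩
        rintro ⟨h, hh⟩
        obtain ⟨b, rfl⟩ := diag_hd hh.2
        have := hd_isWt (A := ⊤) a ⟨b, Submodule.mem_top⟩
        simpa using this
      have h2 : MM S j ∈ wtsp t n (t.algebra n) ζ := by
        refine ⟨he, ?_⟩
        rintro ⟨h, hh⟩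
        obtain ⟨b, rfl⟩ := diag_hd hh.2
        rw [hζ b hh]
        exact wt b
      have h3 := hw 0 ζ _ h1 _ h2
      rw [hv] at h3
      ext ⟨h, hh⟩
      have h4 := h3.2 ⟨h, hh⟩
      have h5 := h2.2 ⟨h, hh⟩
      rw [map_smul, h5, smul_comm] at h4
      have h6 := smul_left_injective ℂ (smul_ne_zero (mul_ne_zero hκ hc) (MM_ne S j)) h4
      simp only [LinearMap.add_apply, LinearMap.zero_apply, add_zero] at h6
      rw [LinearMap.zero_apply]
      linear_combination -h6
    rw [heps, zero_add]
    exact Submodule.smul_mem _ _ ⟨hle hx.1, hx.2⟩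
  · intro i hi k x hx
    suffices h : κ • x ∈ t.grade' n (i + k) from ⟨h, h⟩
    by_cases hκ : κ = 0
    · rw [hκ, zero_smul]; exact Submodule.zero_mem _
    have h1 := hi _ _ _ hg0 _ hg
    rw [hv, Submodule.smul_mem_iff _ (mul_ne_zero hκ hc)] at h1
    have h2 := hdeg _ h1
    have h3 : i = 0 := by omega
    rw [h3, zero_add]
    exact Submodule.smul_mem _ _ (hgle _ hx)

end

/-- For every homogeneous super-biderivation `f` of a Cartan type Lie
superalgebra `L` there are linear maps `φ_f, ψ_f : L → L'` with
`f(x,y) = [φ_f(x), y] = [x, ψ_f(y)]` for all `x, y ∈ L`; moreover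
(1) if `f ∈ BDer(L)_ε` then `φ_f` and `ψ_f` have weight `ε`, and
(2) if `f ∈ BDer(L)_i` then `φ_f` and `ψ_f` have ℤ-degree `i`. -/
theorem superBider_repr (n : ℕ) (t : CT) (ht : t.valid n)
    (pf : ZMod 2) (f : E n →ₗ[ℂ] E n →ₗ[ℂ] E n)
    (hf : IsSuperBider n (t.algebra n) pf f) :
    ∃ phi psi : E n →ₗ[ℂ] E n,
      (∀ x ∈ t.algebra n, phi x ∈ t.prime n ∧ psi x ∈ t.prime n) ∧
      (∀ x ∈ t.algebra n, ∀ y ∈ t.algebra n,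
        f x y = sbL n (phi x) y ∧ f x y = sbL n x (psi y)) ∧
      (∀ eps : Module.Dual ℂ (t.cartan n), t.HasWeight n f eps →
        ∀ eta : Module.Dual ℂ (t.cartan n), ∀ x ∈ wtsp t n (t.algebra n) eta,
          phi x ∈ wtsp t n (t.prime n) (eps + eta) ∧
          psi x ∈ wtsp t n (t.prime n) (eps + eta)) ∧
      (∀ i : ℤ, t.HasDeg n f i → ∀ j : ℤ, ∀ x ∈ t.grade n j,
        phi x ∈ t.grade' n (i + j) ∧ psi x ∈ t.grade' n (i + j)) := by
  have main : ∀ L : Submodule ℂ (E n), SType L → 4 ≤ n → ∃ i j : Fin n, MM {i} j ∈ L ∧ hd (dl i j : Fin n → ℂ) ∈ L ∧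
      ∑ k ∈ {i}, (dl i j : Fin n → ℂ) k - (dl i j : Fin n → ℂ) j ≠ 0 := by
    intro L hL hn
    obtain ⟨i, j, k, l, hij, hik, hil, hjk, hjl, hkl⟩ := four hn
    refine ⟨i, j, (ee_hom hL hij).mem, hL.good.hdm _, ?_⟩
    rw [Finset.sum_singleton, dl_apply, dl_apply, if_pos rfl, if_neg hij, if_neg (Ne.symm hij), if_pos rfl]
    norm_num
  cases t with
  | W =>
    change 4 ≤ n at ht
    obtain ⟨κ, hκ⟩ := S_core W_SType ht hf
    obtain ⟨i, j, h1, h2, h3⟩ := main _ W_SType ht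
    exact assemble CT.W f κ hκ le_rfl {i} j _ h1 h2 h3 ⟨h2, hd_edeg _⟩ ⟨h1, MM_edeg _ _⟩ (fun d hd => MM_deg hd.2) (fun d => le_rfl)
  | S =>
    change 4 ≤ n at ht
    obtain ⟨κ, hκ⟩ := S_core S_SType ht hf
    obtain ⟨i, j, h1, h2, h3⟩ := main _ S_SType ht
    exact assemble CT.S f κ hκ le_sup_left {i} j _ h1 h2 h3 ⟨h2, hd_edeg _⟩ ⟨h1, MM_edeg _ _⟩ (fun d hd => MM_deg hd.2)
      (fun d => inf_le_inf_right _ le_sup_left)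
  | St =>
    change 4 ≤ n ∧ Even n at ht
    have hL := St_SType (n := n) (by omega) ht.2
    obtain ⟨κ, hκ⟩ := S_core hL ht.1 hf
    obtain ⟨i, j, h1, h2, h3⟩ := main _ hL ht.1
    refine assemble CT.St f κ hκ le_rfl {i} j _ h1 h2 h3 ⟨h2, hd_edeg _⟩ ⟨h1, MM_edeg _ _⟩ ?_ (fun d => le_rfl)
    intro d hd
    by_cases hd1 : d = -1
    · exfalso
      simp only [CT.grade, if_pos hd1] at hd
      have hu : ({i} : Finset (Fin n)) ≠ Finset.univ := by
        intro e
        have := congrArg Finset.card e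
        simp at this
        omega
      have key : Submodule.span ℂ (Set.range fun k : Fin n => mulOp n (oneM n) * pd n k) ≤
          LinearMap.ker ((LinearMap.proj ({i} : Finset (Fin n)) : Lambda n →ₗ[ℂ] ℂ) ∘ₗ LinearMap.applyₗ (mono n {j})) := by
        rw [Submodule.span_le]
        rintro _ ⟨k, rfl⟩
        change (mulOp n (oneM n) * P k) (mono n {j}) {i} = 0
        rw [Module.End.mul_apply, oneM_mul, P_x]
        split_ifs <;> simp [mono_ne, omegaTop, hu]
      have := key hd
      change MM {i} j (mono n {j}) {i} = 0 at this
      rw [MM_x, mono_self] at this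
      exact one_ne_zero this
    · simp only [CT.grade, if_neg hd1] at hd
      exact MM_deg hd.2
  | H =>
    change 4 < n at ht
    obtain ⟨κ, hκ⟩ := H_core ht hf
    obtain ⟨c, b, hc, -, -⟩ := base_idx ht
    have e : MM ∅ c = P c := by rw [MM, one_mul_op, one_mul]
    have h1 : MM ∅ c ∈ Hn n := by rw [e]; exact (P_hom ht c).mem
    have h2 := hd_H ht (hh c)
    have hle : Hn n ≤ HtN n ⊔ Submodule.span ℂ {CC n} := by
      refine le_trans ?_ le_sup_left
      rintro _ ⟨g, -, rfl⟩
      exact ⟨g, rfl⟩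
    exact assemble CT.H f κ hκ hle ∅ c _ h1 h2 (by rw [hh_self hc]; simp) ⟨h2, hd_edeg _⟩ ⟨h1, MM_edeg _ _⟩ (fun d hd => MM_deg hd.2)
      (fun d => inf_le_inf_right _ hle)

end CartanSuper
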